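/- arXiv:2411.04514 — 6 statements merged into one kernel-verified Lean document; each statement's English description precedes it below -/
import Mathlib

section
/- Let R be a commutative ring and S a multiplicative subset of R. Let (C, W) be a hereditary cotorsion pair of R-modules cogenerated by a set P of pure-injective R-modules. Then the class C_S = {M_S : M ∈ C} of localized modules is the left-hand class of a hereditary cotorsion pair in the category of R_S-modules cogenerated by the set P^S = {Hom_R(R_S, N) : N ∈ P} of pure-injective R_S-modules, and C_S equals the class of those R_S-modules which lie in C when regarded as R-modules. Moreover (C_S)_(i) = (C_(i))_S for every i ≥ 0. -/
open CategoryTheory Opposite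

noncomputable section

/-- Vanishing of the `n`-th Ext group of two `R`-modules. -/
def extV (R : Type) [Ring R] (M N : ModuleCat.{0} R) (n : ℕ) : Prop :=
  Subsingleton (((_root_.Ext ℤ (ModuleCat.{0} R) n).obj (op M)).obj N)

/-- The left `Ext^1`-orthogonal class. -/
def leftPerp1 (R : Type) [Ring R] (𝒳 : Set (ModuleCat.{0} R)) : Set (ModuleCat.{0} R) :=
  {M | ∀ X ∈ 𝒳, extV R M X 1}

/-- The right `Ext^1`-orthogonal class. -/
def rightPerp1 (R : Type) [Ring R] (𝒳 : Set (ModuleCat.{0} R)) : Set (ModuleCat.{0} R) :=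
  {N | ∀ X ∈ 𝒳, extV R X N 1}

/-- `(𝒞, 𝒲)` is a cotorsion pair. -/
def IsCotorsionPair (R : Type) [Ring R] (𝒞 𝒲 : Set (ModuleCat.{0} R)) : Prop :=
  𝒞 = leftPerp1 R 𝒲 ∧ 𝒲 = rightPerp1 R 𝒞

/-- `(𝒞, 𝒲)` is a hereditary cotorsion pair. -/
def IsHereditaryCotorsionPair (R : Type) [Ring R] (𝒞 𝒲 : Set (ModuleCat.{0} R)) : Prop :=
  IsCotorsionPair R 𝒞 𝒲 ∧ ∀ X ∈ 𝒞, ∀ Y ∈ 𝒲, ∀ i : ℕ, 1 ≤ i → extV R X Y i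

/-- The class `𝒞_(i) = {M ∣ Ext^j(M, W) = 0 for all j > i and all W ∈ 𝒲}`. -/
def cotShift (R : Type) [Ring R] (𝒲 : Set (ModuleCat.{0} R)) (i : ℕ) : Set (ModuleCat.{0} R) :=
  {M | ∀ Y ∈ 𝒲, ∀ j : ℕ, i < j → extV R M Y j}

/-- `f : A →ₗ[R] B` is a pure monomorphism. -/
def IsPureMono (R : Type) [CommRing R] {A B : Type} [AddCommGroup A] [Module R A]
    [AddCommGroup B] [Module R B] (f : A →ₗ[R] B) : Prop :=
  Function.Injective f ∧
    ∀ (Q : Type) [AddCommGroup Q] [Module R Q], Function.Injective (LinearMap.lTensor Q f)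

/-- An `R`-module `N` is pure-injective if it is injective with respect to
pure monomorphisms. -/
def PureInjective (R : Type) [CommRing R] (N : Type) [AddCommGroup N] [Module R N] : Prop :=
  ∀ (A B : Type) [AddCommGroup A] [Module R A] [AddCommGroup B] [Module R B]
    (f : A →ₗ[R] B), IsPureMono R f → ∀ g : A →ₗ[R] N, ∃ h : B →ₗ[R] N, h.comp f = g

/-- The class of localizations `{M_S ∣ M ∈ 𝒳}` (closed under isomorphism). -/
def locClass (R : Type) [CommRing R] (S : Submonoid R) (𝒳 : Set (ModuleCat.{0} R)) :
    Set (ModuleCat.{0} (Localization S)) :=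
  {X | ∃ M ∈ 𝒳, Nonempty (X ≅ ModuleCat.of (Localization S) (LocalizedModule S ↥M))}

/-- The class of `R_S`-modules which lie in `𝒳` when regarded as `R`-modules. -/
def resClass (R : Type) [CommRing R] (S : Submonoid R) (𝒳 : Set (ModuleCat.{0} R)) :
    Set (ModuleCat.{0} (Localization S)) :=
  {X | (ModuleCat.restrictScalars (algebraMap R (Localization S))).obj X ∈ 𝒳}

/-- The `R_S`-module structure on the colocalization `Hom_R(R_S, N)`,
given by `(x • f) (y) = f (x * y)`. -/
instance colocModule (R : Type) [CommRing R] (S : Submonoid R)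
    (N : Type) [AddCommGroup N] [Module R N] :
    Module (Localization S) (Localization S →ₗ[R] N) where
  smul x f := f.comp (LinearMap.mulLeft R x)
  one_smul f := LinearMap.ext fun a => by
    show f (1 * a) = f a
    rw [one_mul]
  mul_smul x y f := LinearMap.ext fun a => by
    show f (x * y * a) = f (y * (x * a))
    ring_nf
  smul_zero x := rfl
  smul_add x f g := rfl
  add_smul x y f := LinearMap.ext fun a => by
    show f ((x + y) * a) = f (x * a) + f (y * a)
    rw [add_mul, map_add]
  zero_smul f := LinearMap.ext fun a => by
    show f (0 * a) = 0
    rw [zero_mul, map_zero]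

/-- The class `Pcl^S = {Hom_R(R_S, N) ∣ N ∈ Pcl}` of colocalizations, as `R_S`-modules. -/
def colocClass (R : Type) [CommRing R] (S : Submonoid R) (Pcl : Set (ModuleCat.{0} R)) :
    Set (ModuleCat.{0} (Localization S)) :=
  {X | ∃ N ∈ Pcl, Nonempty (X ≅ ModuleCat.of (Localization S) (Localization S →ₗ[R] ↥N))}

/-!
Restriction of scalars along a flat ring homomorphism `R → A` is exact, has the right adjoint
`N ↦ Hom_R(A, N)`, and sends projective `A`-modules to flat `R`-modules. If `N` is pure-injective,
then `Ext¹_R(L, N) = 0` for every flat `L`, since short exact sequences ending in a flat module are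
pure. Hence a projective presentation of an `A`-module `X` computes both sides of
`Ext¹_A(X, Hom_R(A, N)) = 0 ↔ Ext¹_R(X, N) = 0`, so the `A`-modules lying in `𝒞` over `R` are the
left orthogonal of the modules `Hom_R(A, N)`.

Moreover `Ext¹_R(M, N) = 0` implies `Ext¹_R(L ⊗ M, N) = 0` for flat `L`: for `L` projective, lift
along `Hom(F, N) → Hom(K, N)` for a presentation `0 → K → F → M → 0`; in general tensor a
presentation of `L`, which stays pure exact, with `M`. Thus `A ⊗ M ∈ 𝒞` for `M ∈ 𝒞`. If `R → A` is
also an epimorphism, as a localization is, then every `A`-module `X` is `A ⊗ X`, so extension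
and restriction give the same class. The classes `𝒞_(i)` follow by dimension shifting along the
exact functors `A ⊗ -` and restriction.
-/

section ExtVanishing

variable {R : Type} [Ring R] {M M' N N' : ModuleCat.{0} R} {n : ℕ}

theorem extV_iff_isZero_ext :
    extV R M N n ↔ Limits.IsZero (((_root_.Ext ℤ (ModuleCat.{0} R) n).obj (op M)).obj N) :=
  ModuleCat.isZero_iff_subsingleton.symm

theorem extV_succ_iff_subsingleton_ext :
    extV R M N (n + 1) ↔ Subsingleton (Abelian.Ext M N (n + 1)) := by
  let P := projectiveResolution M
  have exact_iff : extV R M N (n + 1) ↔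
      ∀ f : P.complex.X (n + 1) ⟶ N, P.complex.d (n + 2) (n + 1) ≫ f = 0 →
        ∃ g : P.complex.X n ⟶ N, P.complex.d (n + 1) n ≫ g = f := by
    rw [extV_iff_isZero_ext, (P.isoExt (R := ℤ) (n + 1) N).isZero_iff,
      ← HomologicalComplex.exactAt_iff_isZero_homology,
      HomologicalComplex.exactAt_iff' _ n (n + 1) (n + 2) (by simp) (by simp),
      ShortComplex.moduleCat_exact_iff]
    rfl
  rw [exact_iff]
  constructor
  · refine fun h ↦ subsingleton_of_forall_eq 0 fun a ↦ ?_
    obtain ⟨f, hf, rfl⟩ := P.extMk_surjective a (n + 2) rfl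
    exact (P.extMk_eq_zero_iff f _ rfl hf n rfl).2 (h f hf)
  · exact fun _ f hf ↦ (P.extMk_eq_zero_iff f _ rfl hf n rfl).1 (Subsingleton.elim _ _)

theorem extV_congr (e : M ≅ M') (e' : N ≅ N') : extV R M N n ↔ extV R M' N' n := by
  have extIso := ((_root_.Ext ℤ (ModuleCat.{0} R) n).mapIso e.op.symm).app N ≪≫
    ((_root_.Ext ℤ (ModuleCat.{0} R) n).obj (op M')).mapIso e'
  exact extIso.toLinearEquiv.toEquiv.subsingleton_congr

theorem extV_succ_of_projective [Projective M] (N : ModuleCat.{0} R) (n : ℕ) :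
    extV R M N (n + 1) :=
  extV_iff_isZero_ext.2 (isZero_Ext_succ_of_projective M N n)

end ExtVanishing

section ShortExactSequences

variable {R : Type} [Ring R] {S : ShortComplex (ModuleCat.{0} R)} {N : ModuleCat.{0} R}

theorem extV_one_iff_precomp_surjective (hS : S.ShortExact) (h₂ : extV R S.X₂ N 1) :
    extV R S.X₃ N 1 ↔ Function.Surjective (fun v : S.X₂ ⟶ N ↦ S.f ≫ v) := by
  rw [extV_succ_iff_subsingleton_ext] at h₂ ⊢
  constructor
  · intro h₃ u
    obtain ⟨x, hx⟩ := Abelian.Ext.contravariant_sequence_exact₁ hS N (Abelian.Ext.mk₀ u)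
      (n₁ := 1) rfl (Subsingleton.elim _ _)
    obtain ⟨v, rfl⟩ := (Abelian.Ext.mk₀_bijective _ _).2 x
    rw [Abelian.Ext.mk₀_comp_mk₀] at hx
    exact ⟨v, (Abelian.Ext.mk₀_bijective _ _).1 hx⟩
  · refine fun h ↦ subsingleton_of_forall_eq 0 fun a ↦ ?_
    obtain ⟨x, rfl⟩ := Abelian.Ext.contravariant_sequence_exact₃ hS N a
      (Subsingleton.elim _ _) (n₀ := 0) rfl
    obtain ⟨u, rfl⟩ := (Abelian.Ext.mk₀_bijective _ _).2 x
    obtain ⟨v, rfl⟩ := h u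
    rw [← Abelian.Ext.mk₀_comp_mk₀]
    exact hS.extClass_comp_assoc _

theorem extV_succ_succ_iff (hS : S.ShortExact) {n : ℕ} (h₂ : extV R S.X₂ N (n + 1))
    (h₂' : extV R S.X₂ N (n + 2)) : extV R S.X₃ N (n + 2) ↔ extV R S.X₁ N (n + 1) := by
  rw [extV_succ_iff_subsingleton_ext] at h₂ h₂' ⊢
  rw [extV_succ_iff_subsingleton_ext]
  constructor
  · refine fun h₃ ↦ subsingleton_of_forall_eq 0 fun a ↦ ?_
    obtain ⟨x, rfl⟩ := Abelian.Ext.contravariant_sequence_exact₁ hS N a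
      (n₁ := n + 1 + 1) (add_comm _ _) (Subsingleton.elim _ _)
    rw [Subsingleton.elim x 0, Abelian.Ext.comp_zero]
  · refine fun h₁ ↦ subsingleton_of_forall_eq 0 fun a ↦ ?_
    obtain ⟨x, rfl⟩ := Abelian.Ext.contravariant_sequence_exact₃ hS N a
      (Subsingleton.elim _ _) (n₀ := n + 1) (add_comm _ _)
    rw [Subsingleton.elim x 0, Abelian.Ext.comp_zero]

end ShortExactSequences

section CotorsionPairs

variable {A : Type} [Ring A] {𝒞 𝒲 : Set (ModuleCat.{0} A)}

theorem mem_cotShift_congr {i : ℕ} {X Y : ModuleCat.{0} A} (e : X ≅ Y) :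
    X ∈ cotShift A 𝒲 i ↔ Y ∈ cotShift A 𝒲 i :=
  forall₄_congr fun W _ _ _ ↦ extV_congr e (Iso.refl W)

theorem cotShift_mono (𝒲 : Set (ModuleCat.{0} A)) : Monotone (cotShift A 𝒲) :=
  fun _ _ hij _ hX W hW k hk ↦ hX W hW k (hij.trans_lt hk)

theorem mem_cotShift_of_projective (𝒲 : Set (ModuleCat.{0} A)) (P : ModuleCat.{0} A)
    [Projective P] (i : ℕ) : P ∈ cotShift A 𝒲 i
  | W, _, j + 1, _ => extV_succ_of_projective W j

theorem mem_cotShift_succ_iff {S : ShortComplex (ModuleCat.{0} A)} (hS : S.ShortExact)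
    (h₂ : S.X₂ ∈ cotShift A 𝒲 0) (i : ℕ) :
    S.X₃ ∈ cotShift A 𝒲 (i + 1) ↔ S.X₁ ∈ cotShift A 𝒲 i := by
  have shift {W} (hW : W ∈ 𝒲) (j : ℕ) : extV A S.X₃ W (j + 2) ↔ extV A S.X₁ W (j + 1) :=
    extV_succ_succ_iff hS (h₂ W hW _ j.succ_pos) (h₂ W hW _ (j + 1).succ_pos)
  constructor
  · rintro h₃ W hW (_ | j) hj
    · exact absurd hj i.not_lt_zero
    · exact (shift hW j).1 (h₃ W hW (j + 2) (by lia))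
  · rintro h₁ W hW (_ | _ | j) hj
    · lia
    · lia
    · exact (shift hW j).2 (h₁ W hW (j + 1) (by lia))

theorem mem_cotShift_succ_iff_syzygy (X : ModuleCat.{0} A) (i : ℕ) :
    X ∈ cotShift A 𝒲 (i + 1) ↔ X.projectiveShortComplex.X₁ ∈ cotShift A 𝒲 i :=
  mem_cotShift_succ_iff (ModuleCat.shortExact_projectiveShortComplex X)
    (mem_cotShift_of_projective 𝒲 _ 0) i

theorem IsHereditaryCotorsionPair.cotShift_zero (h : IsHereditaryCotorsionPair A 𝒞 𝒲) :
    cotShift A 𝒲 0 = 𝒞 := by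
  refine Set.Subset.antisymm (fun X hX ↦ ?_) (fun X hX W hW j hj ↦ h.2 X hX W hW j hj)
  rw [h.1.1]
  exact fun W hW ↦ hX W hW 1 one_pos

theorem isCotorsionPair_leftPerp1 (𝒳 : Set (ModuleCat.{0} A)) :
    IsCotorsionPair A (leftPerp1 A 𝒳) (rightPerp1 A (leftPerp1 A 𝒳)) :=
  ⟨Set.Subset.antisymm (fun X hX _ hY ↦ hY X hX)
    (fun _ hX Y hY ↦ hX Y fun _ hZ ↦ hZ Y hY), rfl⟩

theorem IsCotorsionPair.isHereditary_of_syzygy_mem (h : IsCotorsionPair A 𝒞 𝒲)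
    (syzygy_mem : ∀ X ∈ 𝒞, X.projectiveShortComplex.X₁ ∈ 𝒞) :
    IsHereditaryCotorsionPair A 𝒞 𝒲 := by
  refine ⟨h, fun X hX Y hY i hi ↦ ?_⟩
  induction i, hi using Nat.le_induction generalizing X with
  | base => exact (h.1 ▸ hX : X ∈ leftPerp1 A 𝒲) Y hY
  | succ i hi ih =>
    obtain ⟨n, rfl⟩ := Nat.exists_eq_add_of_le' hi
    exact (extV_succ_succ_iff (ModuleCat.shortExact_projectiveShortComplex X)
      (extV_succ_of_projective Y n) (extV_succ_of_projective Y (n + 1))).2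
      (ih _ (syzygy_mem X hX))

end CotorsionPairs

section ExactFunctors

open Limits

variable {A B : Type} [Ring A] [Ring B] {𝒲 : Set (ModuleCat.{0} A)} {𝒲' : Set (ModuleCat.{0} B)}
  (T : ModuleCat.{0} A ⥤ ModuleCat.{0} B) [PreservesFiniteLimits T] [PreservesFiniteColimits T]

theorem map_mem_cotShift (h₀ : ∀ X ∈ cotShift A 𝒲 0, T.obj X ∈ cotShift B 𝒲' 0)
    {i : ℕ} {X : ModuleCat.{0} A} (hX : X ∈ cotShift A 𝒲 i) : T.obj X ∈ cotShift B 𝒲' i := by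
  induction i generalizing X with
  | zero => exact h₀ X hX
  | succ i ih =>
    have hS := (ModuleCat.shortExact_projectiveShortComplex X).map_of_exact T
    exact (mem_cotShift_succ_iff hS (h₀ _ (mem_cotShift_of_projective 𝒲 _ 0)) i).2
      (ih ((mem_cotShift_succ_iff_syzygy X i).1 hX))

theorem map_mem_cotShift_iff (h₀ : ∀ X, T.obj X ∈ cotShift B 𝒲' 0 ↔ X ∈ cotShift A 𝒲 0)
    (i : ℕ) (X : ModuleCat.{0} A) : T.obj X ∈ cotShift B 𝒲' i ↔ X ∈ cotShift A 𝒲 i := by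
  induction i generalizing X with
  | zero => exact h₀ X
  | succ i ih =>
    have hS := (ModuleCat.shortExact_projectiveShortComplex X).map_of_exact T
    rw [mem_cotShift_succ_iff_syzygy X, ← ih X.projectiveShortComplex.X₁]
    exact mem_cotShift_succ_iff hS ((h₀ _).2 (mem_cotShift_of_projective 𝒲 _ 0)) i

end ExactFunctors

section PureInjectives

open TensorProduct

variable {R : Type} [CommRing R] {K F N N' : Type} [AddCommGroup K] [Module R K]
  [AddCommGroup F] [Module R F] [AddCommGroup N] [Module R N] [AddCommGroup N'] [Module R N']

theorem isPureMono_of_flat {S : ShortComplex (ModuleCat.{0} R)} (hS : S.ShortExact)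
    [Module.Flat R S.X₃] : IsPureMono R S.f.hom :=
  ⟨hS.moduleCat_injective_f, @fun Q _ _ ↦ LinearMap.lTensor_injective_of_exact_of_flat
    S.g.hom hS.moduleCat_surjective_g S.f.hom hS.moduleCat_injective_f
    ((ShortComplex.ShortExact.moduleCat_exact_iff_function_exact S).1 hS.exact) Q⟩

theorem IsPureMono.rTensor {f : K →ₗ[R] F} (hf : IsPureMono R f) (M : Type) [AddCommGroup M]
    [Module R M] : IsPureMono R (f.rTensor M) := by
  refine ⟨(LinearMap.lTensor_inj_iff_rTensor_inj M f).1 (hf.2 M), fun Q _ _ ↦ ?_⟩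
  have inj : Function.Injective (f.rTensor (M ⊗[R] Q)) :=
    (LinearMap.lTensor_inj_iff_rTensor_inj _ f).1 (hf.2 _)
  rw [LinearMap.lTensor_inj_iff_rTensor_inj]
  rw [LinearMap.rTensor_tensor] at inj
  simpa using inj

theorem PureInjective.of_equiv (e : N ≃ₗ[R] N') (hN : PureInjective R N) : PureInjective R N' := by
  intro A B _ _ _ _ f hf g
  obtain ⟨h, hh⟩ := hN A B f hf (e.symm ∘ₗ g)
  refine ⟨e ∘ₗ h, ?_⟩
  rw [LinearMap.comp_assoc, hh]
  ext; simp

theorem pureInjective_iff_precomp_surjective {N : ModuleCat.{0} R} :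
    PureInjective R N ↔ ∀ ⦃X Y : ModuleCat.{0} R⦄ (f : X ⟶ Y), IsPureMono R f.hom →
      Function.Surjective (fun v : Y ⟶ N ↦ f ≫ v) := by
  constructor
  · intro hN X Y f hf u
    obtain ⟨v, hv⟩ := hN X Y f.hom hf u.hom
    exact ⟨ModuleCat.ofHom v, ModuleCat.hom_ext hv⟩
  · intro h X Y _ _ _ _ f hf u
    obtain ⟨v, hv⟩ := h (ModuleCat.ofHom f) hf (ModuleCat.ofHom u)
    exact ⟨v.hom, congrArg ModuleCat.Hom.hom hv⟩

theorem extV_one_of_isPureMono {S : ShortComplex (ModuleCat.{0} R)} (hS : S.ShortExact)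
    (hf : IsPureMono R S.f.hom) {N : ModuleCat.{0} R} (hN : PureInjective R N)
    (h₂ : extV R S.X₂ N 1) : extV R S.X₃ N 1 :=
  (extV_one_iff_precomp_surjective hS h₂).2 (pureInjective_iff_precomp_surjective.1 hN S.f hf)

open MonoidalCategory

theorem extV_one_tensor_of_projective (Q : ModuleCat.{0} R) [Module.Projective R Q]
    {M N : ModuleCat.{0} R} (h : extV R M N 1) : extV R (Q ⊗ M) N 1 := by
  have hS := ModuleCat.shortExact_projectiveShortComplex M
  let F := M.projectiveShortComplex.X₂
  have : Projective (Q ⊗ F) :=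
    (IsProjective.iff_projective _).1 (inferInstanceAs (Module.Projective R (Q ⊗[R] F)))
  have middle_vanishes : extV R (Q ⊗ F) N 1 := extV_succ_of_projective N 0
  refine (extV_one_iff_precomp_surjective (hS.map_of_exact (tensorLeft Q)) middle_vanishes).2
    fun u ↦ ?_
  have restrict_surjective : Function.Surjective
      (LinearMap.lcomp R N M.projectiveShortComplex.f.hom) := fun w ↦ by
    obtain ⟨v, hv⟩ := (extV_one_iff_precomp_surjective hS (extV_succ_of_projective N 0)).1 h
      (ModuleCat.ofHom w)
    exact ⟨v.hom, congrArg ModuleCat.Hom.hom hv⟩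
  obtain ⟨v, hv⟩ := Module.projective_lifting_property _ (TensorProduct.curry u.hom)
    restrict_surjective
  refine ⟨ModuleCat.ofHom (TensorProduct.lift v), ModuleCat.hom_ext (TensorProduct.ext ?_)⟩
  exact hv

theorem IsPureMono.shortExact_map_tensorRight {S : ShortComplex (ModuleCat.{0} R)}
    (hf : IsPureMono R S.f.hom) (hS : S.ShortExact) (M : ModuleCat.{0} R) :
    (S.map (tensorRight M)).ShortExact :=
  ModuleCat.shortComplex_shortExact _
    (rTensor_exact M ((ShortComplex.ShortExact.moduleCat_exact_iff_function_exact S).1 hS.exact)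
      hS.moduleCat_surjective_g)
    (hf.rTensor M).1 (LinearMap.rTensor_surjective M hS.moduleCat_surjective_g)

theorem extV_one_tensor_of_flat (L : ModuleCat.{0} R) [Module.Flat R L]
    {M N : ModuleCat.{0} R} (hN : PureInjective R N) (h : extV R M N 1) :
    extV R (L ⊗ M) N 1 := by
  have hS := ModuleCat.shortExact_projectiveShortComplex L
  have : Module.Flat R L.projectiveShortComplex.X₃ := ‹_›
  have hf := isPureMono_of_flat hS
  exact extV_one_of_isPureMono (hf.shortExact_map_tensorRight hS M) (hf.rTensor M) hN
    (extV_one_tensor_of_projective _ h)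

theorem extV_one_of_flat (L : ModuleCat.{0} R) [Module.Flat R L] {N : ModuleCat.{0} R}
    (hN : PureInjective R N) : extV R L N 1 :=
  (extV_congr (ρ_ L) (Iso.refl N)).1 (extV_one_tensor_of_flat L hN (extV_succ_of_projective N 0))

end PureInjectives

section ChangeOfRings

open TensorProduct MonoidalCategory

theorem precomp_surjective_iff_of_adjunction {C D : Type*} [Category* C] [Category* D] {F : C ⥤ D}
    {G : D ⥤ C} (adj : F ⊣ G) {X Y : C} (f : X ⟶ Y) (N : D) :
    Function.Surjective (fun v : Y ⟶ G.obj N ↦ f ≫ v) ↔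
      Function.Surjective (fun v : F.obj Y ⟶ N ↦ F.map f ≫ v) := by
  rw [← (adj.homEquiv X N).comp_surjective, ← (adj.homEquiv Y N).surjective_comp]
  refine iff_of_eq (congrArg _ (funext fun v ↦ ?_))
  exact (adj.homEquiv_naturality_left f v).symm

variable {R A : Type} [CommRing R] [CommRing A] [Algebra R A]

theorem IsPureMono.restrictScalars {X Y : Type} [AddCommGroup X] [Module R X] [Module A X]
    [IsScalarTower R A X] [AddCommGroup Y] [Module R Y] [Module A Y] [IsScalarTower R A Y]
    {f : X →ₗ[A] Y} (hf : IsPureMono A f) : IsPureMono R (f.restrictScalars R) := by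
  refine ⟨hf.1, fun Q _ _ ↦ (LinearMap.lTensor_inj_iff_rTensor_inj _ _).2 ?_⟩
  let cancelX := AlgebraTensorModule.cancelBaseChange R A A X Q
  let cancelY := AlgebraTensorModule.cancelBaseChange R A A Y Q
  have naturality : AlgebraTensorModule.map f LinearMap.id ∘ₗ cancelX.toLinearMap =
      cancelY.toLinearMap ∘ₗ f.rTensor (A ⊗[R] Q) := by
    ext x q
    simp [cancelX, cancelY]
  have inj : Function.Injective (cancelY ∘ f.rTensor (A ⊗[R] Q)) :=
    cancelY.injective.comp ((LinearMap.lTensor_inj_iff_rTensor_inj _ _).1 (hf.2 _))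
  refine (Function.Injective.of_comp_iff' _ cancelX.bijective).1 ?_
  convert inj using 1
  exact congrArg DFunLike.coe naturality

instance isScalarTower_restrictScalars (X : ModuleCat.{0} A) :
    IsScalarTower R A ((ModuleCat.restrictScalars (algebraMap R A)).obj X) :=
  IsScalarTower.of_algebraMap_smul fun _ _ ↦ rfl

theorem isPureMono_restrictScalars_map {X Y : ModuleCat.{0} A} {f : X ⟶ Y}
    (hf : IsPureMono A f.hom) :
    IsPureMono R ((ModuleCat.restrictScalars (algebraMap R A)).map f).hom :=
  let X' := (ModuleCat.restrictScalars (algebraMap R A)).obj X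
  let Y' := (ModuleCat.restrictScalars (algebraMap R A)).obj Y
  let f' : X' →ₗ[A] Y' := f.hom
  IsPureMono.restrictScalars (f := f') hf

theorem PureInjective.coextendScalars {N : ModuleCat.{0} R} (hN : PureInjective R N) :
    PureInjective A ((ModuleCat.coextendScalars (algebraMap R A)).obj N) :=
  pureInjective_iff_precomp_surjective.2 fun _ _ f hf ↦
    (precomp_surjective_iff_of_adjunction
      (ModuleCat.restrictCoextendScalarsAdj (algebraMap R A)) f N).2
      (pureInjective_iff_precomp_surjective.1 hN _ (isPureMono_restrictScalars_map hf))

instance flat_restrictScalars [Module.Flat R A] (X : ModuleCat.{0} A) [Module.Flat A X] :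
    Module.Flat R ((ModuleCat.restrictScalars (algebraMap R A)).obj X) :=
  have : Module.Flat A ((ModuleCat.restrictScalars (algebraMap R A)).obj X) := ‹_›
  Module.Flat.trans R A _

theorem extV_one_coextendScalars_iff [Module.Flat R A] {X : ModuleCat.{0} A} {N : ModuleCat.{0} R}
    (hN : PureInjective R N) :
    extV A X ((ModuleCat.coextendScalars (algebraMap R A)).obj N) 1 ↔
      extV R ((ModuleCat.restrictScalars (algebraMap R A)).obj X) N 1 := by
  have hS := ModuleCat.shortExact_projectiveShortComplex X
  rw [show extV A X _ 1 ↔ _ from extV_one_iff_precomp_surjective hS (extV_succ_of_projective _ 0),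
    precomp_surjective_iff_of_adjunction (ModuleCat.restrictCoextendScalarsAdj (algebraMap R A))]
  exact (extV_one_iff_precomp_surjective
    (hS.map_of_exact (ModuleCat.restrictScalars (algebraMap R A)))
    (extV_one_of_flat ((ModuleCat.restrictScalars _).obj X.projectiveShortComplex.X₂) hN)).symm

/-- The class of `A`-modules which lie in `𝒳` when regarded as `R`-modules. -/
def restrictionClass (A : Type) [CommRing A] [Algebra R A] (𝒳 : Set (ModuleCat.{0} R)) :
    Set (ModuleCat.{0} A) :=
  {X | (ModuleCat.restrictScalars (algebraMap R A)).obj X ∈ 𝒳}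

/-- The class `{A ⊗[R] M ∣ M ∈ 𝒳}` of extended modules (closed under isomorphism). -/
def extensionClass (A : Type) [CommRing A] [Algebra R A] (𝒳 : Set (ModuleCat.{0} R)) :
    Set (ModuleCat.{0} A) :=
  {X | ∃ M ∈ 𝒳, Nonempty (X ≅ ModuleCat.of A (A ⊗[R] M))}

/-- The class `{Hom_R(A, N) ∣ N ∈ 𝒳}` of coextended modules (closed under isomorphism). -/
def coextensionClass (A : Type) [CommRing A] [Algebra R A] (𝒳 : Set (ModuleCat.{0} R)) :
    Set (ModuleCat.{0} A) :=
  {X | ∃ N ∈ 𝒳, Nonempty (X ≅ (ModuleCat.coextendScalars (algebraMap R A)).obj N)}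

variable {𝒲 Pcl : Set (ModuleCat.{0} R)}

theorem pureInjective_of_mem_coextensionClass (hPI : ∀ N ∈ Pcl, PureInjective R N)
    {X : ModuleCat.{0} A} : X ∈ coextensionClass A Pcl → PureInjective A X
  | ⟨N, hN, ⟨e⟩⟩ => (hPI N hN).coextendScalars.of_equiv e.symm.toLinearEquiv

theorem restrictionClass_leftPerp1 [Module.Flat R A] (hPI : ∀ N ∈ Pcl, PureInjective R N) :
    restrictionClass A (leftPerp1 R Pcl) = leftPerp1 A (coextensionClass A Pcl) := by
  ext X
  constructor
  · rintro hX Y ⟨N, hN, ⟨e⟩⟩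
    exact (extV_congr (Iso.refl X) e).2 ((extV_one_coextendScalars_iff (hPI N hN)).2 (hX N hN))
  · intro hX N hN
    exact (extV_one_coextendScalars_iff (hPI N hN)).1 (hX _ ⟨N, hN, ⟨Iso.refl _⟩⟩)

/-- Restricting scalars along `R → A` on an `A`-module which is already an `R`-module through a
scalar tower gives back its original `R`-module structure. -/
def restrictScalarsIso (M : Type) [AddCommGroup M] [Module R M] [Module A M]
    [IsScalarTower R A M] :
    (ModuleCat.restrictScalars (algebraMap R A)).obj (ModuleCat.of A M) ≅ ModuleCat.of R M :=
  let M' := (ModuleCat.restrictScalars (algebraMap R A)).obj (ModuleCat.of A M)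
  let e : M' ≃+ M := AddEquiv.refl M
  have smul_e (r : R) (x : M') : e (r • x) = r • e x := algebraMap_smul A r (e x)
  (e.toLinearEquiv smul_e).toModuleIso

theorem extensionClass_cotShift_subset [Module.Flat R A]
    (hpair : IsHereditaryCotorsionPair R (leftPerp1 R Pcl) 𝒲)
    (hPI : ∀ N ∈ Pcl, PureInjective R N) (i : ℕ) :
    extensionClass A (cotShift R 𝒲 i) ⊆ restrictionClass A (cotShift R 𝒲 i) := by
  rintro X ⟨M, hM, ⟨e⟩⟩
  have resIso : (ModuleCat.restrictScalars (algebraMap R A)).obj X ≅ ModuleCat.of R A ⊗ M :=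
    (ModuleCat.restrictScalars _).mapIso e ≪≫ restrictScalarsIso (A ⊗[R] M)
  have tensor_mem : ∀ Y ∈ cotShift R 𝒲 0, ModuleCat.of R A ⊗ Y ∈ cotShift R 𝒲 0 := by
    rw [hpair.cotShift_zero]
    exact fun Y hY N hN ↦ extV_one_tensor_of_flat _ (hPI N hN) (hY N hN)
  exact (mem_cotShift_congr resIso).2
    (map_mem_cotShift (tensorLeft (ModuleCat.of R A)) tensor_mem hM)

theorem restrictionClass_subset_extensionClass [Algebra.IsEpi R A] (𝒳 : Set (ModuleCat.{0} R)) :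
    restrictionClass A 𝒳 ⊆ extensionClass A 𝒳 := fun X hX ↦
  let X' := (ModuleCat.restrictScalars (algebraMap R A)).obj X
  ⟨X', hX, ⟨(TensorProduct.lid' R A X').symm.toModuleIso⟩⟩

theorem extensionClass_cotShift [Module.Flat R A] [Algebra.IsEpi R A]
    (hpair : IsHereditaryCotorsionPair R (leftPerp1 R Pcl) 𝒲)
    (hPI : ∀ N ∈ Pcl, PureInjective R N) (i : ℕ) :
    extensionClass A (cotShift R 𝒲 i) = restrictionClass A (cotShift R 𝒲 i) :=
  (extensionClass_cotShift_subset hpair hPI i).antisymm (restrictionClass_subset_extensionClass _)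

theorem isHereditaryCotorsionPair_restrictionClass [Module.Flat R A]
    (hpair : IsHereditaryCotorsionPair R (leftPerp1 R Pcl) 𝒲)
    (hPI : ∀ N ∈ Pcl, PureInjective R N) :
    IsHereditaryCotorsionPair A (restrictionClass A (leftPerp1 R Pcl))
      (rightPerp1 A (restrictionClass A (leftPerp1 R Pcl))) := by
  refine IsCotorsionPair.isHereditary_of_syzygy_mem ?_ fun X hX ↦ ?_
  · rw [restrictionClass_leftPerp1 hPI]
    exact isCotorsionPair_leftPerp1 _
  · have hS := (ModuleCat.shortExact_projectiveShortComplex X).map_of_exact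
      (ModuleCat.restrictScalars (algebraMap R A))
    rw [← hpair.cotShift_zero] at hX ⊢
    refine (mem_cotShift_succ_iff hS ?_ 0).1 (cotShift_mono 𝒲 zero_le_one hX)
    rw [hpair.cotShift_zero]
    exact fun N hN ↦
      extV_one_of_flat ((ModuleCat.restrictScalars _).obj X.projectiveShortComplex.X₂) (hPI N hN)

theorem cotShift_rightPerp1_restrictionClass [Module.Flat R A]
    (hpair : IsHereditaryCotorsionPair R (leftPerp1 R Pcl) 𝒲)
    (hPI : ∀ N ∈ Pcl, PureInjective R N) (i : ℕ) :
    cotShift A (rightPerp1 A (restrictionClass A (leftPerp1 R Pcl))) i =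
      restrictionClass A (cotShift R 𝒲 i) := by
  ext X
  refine (map_mem_cotShift_iff (ModuleCat.restrictScalars (algebraMap R A)) (fun Y ↦ ?_) i X).symm
  rw [hpair.cotShift_zero, (isHereditaryCotorsionPair_restrictionClass hpair hPI).cotShift_zero]
  rfl

end ChangeOfRings

theorem stmt2_general (R A : Type) [CommRing R] [CommRing A] [Algebra R A] [Module.Flat R A]
    [Algebra.IsEpi R A] (𝒞 𝒲 Pcl : Set (ModuleCat.{0} R))
    (hpair : IsHereditaryCotorsionPair R 𝒞 𝒲)
    (hPI : ∀ P ∈ Pcl, PureInjective R ↥P)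
    (hcogen : 𝒞 = leftPerp1 R Pcl) :
    (∀ X ∈ coextensionClass A Pcl, PureInjective A ↥X) ∧
    IsHereditaryCotorsionPair A (extensionClass A 𝒞) (rightPerp1 A (extensionClass A 𝒞)) ∧
    extensionClass A 𝒞 = leftPerp1 A (coextensionClass A Pcl) ∧
    extensionClass A 𝒞 = restrictionClass A 𝒞 ∧
    (∀ i : ℕ,
      cotShift A (rightPerp1 A (extensionClass A 𝒞)) i = extensionClass A (cotShift R 𝒲 i)) := by
  subst hcogen
  have extension_eq : extensionClass A (leftPerp1 R Pcl) = restrictionClass A (leftPerp1 R Pcl) :=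
    hpair.cotShift_zero ▸ extensionClass_cotShift hpair hPI 0
  rw [extension_eq]
  refine ⟨fun X ↦ pureInjective_of_mem_coextensionClass hPI,
    isHereditaryCotorsionPair_restrictionClass hpair hPI, restrictionClass_leftPerp1 hPI, rfl,
    fun i ↦ ?_⟩
  rw [extensionClass_cotShift hpair hPI, cotShift_rightPerp1_restrictionClass hpair hPI]

section Localization

variable {R : Type} [CommRing R] (S : Submonoid R)

instance isEpi_localization : Algebra.IsEpi R (Localization S) :=
  CommRingCat.epi_iff_epi.mp (Localization.epi S)

theorem locClass_eq_extensionClass (𝒳 : Set (ModuleCat.{0} R)) :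
    locClass R S 𝒳 = extensionClass (Localization S) 𝒳 := by
  ext X
  refine exists_congr fun M ↦ and_congr_right fun _ ↦ ?_
  exact (LocalizedModule.equivTensorProduct S M).toModuleIso.isoCongrRight.nonempty_congr

/-- The two descriptions of the colocalization `Hom_R(R_S, N)`, by `colocModule` and by coextension
of scalars, agree. -/
def coextendScalarsIsoColoc (N : ModuleCat.{0} R) :
    (ModuleCat.coextendScalars (algebraMap R (Localization S))).obj N ≅
      ModuleCat.of (Localization S) (Localization S →ₗ[R] N) :=
  let e := (restrictScalarsIso (R := R) (A := Localization S) (Localization S)).toLinearEquiv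
  let φ : (ModuleCat.coextendScalars (algebraMap R (Localization S))).obj N ≃ₗ[Localization S]
      (Localization S →ₗ[R] N) :=
    { toFun f := ModuleCat.CoextendScalars.equiv _ N f ∘ₗ e.symm.toLinearMap
      invFun f := (ModuleCat.CoextendScalars.equiv _ N).symm (f ∘ₗ e.toLinearMap)
      map_add' _ _ := rfl
      map_smul' x f := LinearMap.ext fun y ↦ congrArg f (mul_comm y x)
      left_inv _ := rfl
      right_inv _ := rfl }
  φ.toModuleIso

theorem colocClass_eq_coextensionClass (𝒳 : Set (ModuleCat.{0} R)) :
    colocClass R S 𝒳 = coextensionClass (Localization S) 𝒳 := by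
  ext X
  refine exists_congr fun N ↦ and_congr_right fun _ ↦ ?_
  exact (coextendScalarsIsoColoc S N).symm.isoCongrRight.nonempty_congr

end Localization

/-- for a hereditary cotorsion pair `(𝒞, 𝒲)` of `R`-modules cogenerated by a
set `Pcl` of pure-injective modules, the class `𝒞_S` of localized modules is the left-hand
class of a hereditary cotorsion pair of `R_S`-modules cogenerated by the set `Pcl^S` of
pure-injective `R_S`-modules; moreover `𝒞_S` is the class of `R_S`-modules lying in `𝒞`
as `R`-modules, and `(𝒞_S)_(i) = (𝒞_(i))_S` for all `i ≥ 0`. -/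
theorem stmt2 (R : Type) [CommRing R] (S : Submonoid R)
    (𝒞 𝒲 Pcl : Set (ModuleCat.{0} R))
    (hpair : IsHereditaryCotorsionPair R 𝒞 𝒲)
    (hPI : ∀ P ∈ Pcl, PureInjective R ↥P)
    (hcogen : 𝒞 = leftPerp1 R Pcl) :
    (∀ X ∈ colocClass R S Pcl, PureInjective (Localization S) ↥X) ∧
    IsHereditaryCotorsionPair (Localization S) (locClass R S 𝒞)
      (rightPerp1 (Localization S) (locClass R S 𝒞)) ∧
    locClass R S 𝒞 = leftPerp1 (Localization S) (colocClass R S Pcl) ∧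
    locClass R S 𝒞 = resClass R S 𝒞 ∧
    (∀ i : ℕ,
      cotShift (Localization S) (rightPerp1 (Localization S) (locClass R S 𝒞)) i =
        locClass R S (cotShift R 𝒲 i)) := by
  simp only [colocClass_eq_coextensionClass, locClass_eq_extensionClass]
  exact stmt2_general R (Localization S) 𝒞 𝒲 Pcl hpair hPI hcogen
end
end

section
/- Let R be a commutative ring and S a multiplicative subset of R. Let (E, C) be a Tor-pair of R-modules. Then (E_S, C_S), where E_S = {E_S : E ∈ E} and C_S = {C_S : C ∈ C}, is a Tor-pair in the category of R_S-modules; moreover E_S equals the class of R_S-modules lying in E, and C_S equals the class of R_S-modules lying in C. If in addition (E, C) is hereditary, then ((E_S)_(i), (C_S)_(i)) coincides with ((E_(i))_S, (C_(i))_S) as Tor-pairs of R_S-modules for every i ≥ 0. -/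
open CategoryTheory Opposite

noncomputable section

/-- Vanishing of the `n`-th Tor group of two `R`-modules. -/
def torV (R : Type) [CommRing R] (M N : ModuleCat.{0} R) (n : ℕ) : Prop :=
  Subsingleton (((Tor (ModuleCat.{0} R) n).obj M).obj N)

/-- The left `Tor_1`-orthogonal class. -/
def torLeft1 (R : Type) [CommRing R] (𝒳 : Set (ModuleCat.{0} R)) : Set (ModuleCat.{0} R) :=
  {M | ∀ X ∈ 𝒳, torV R M X 1}

/-- The right `Tor_1`-orthogonal class. -/
def torRight1 (R : Type) [CommRing R] (𝒳 : Set (ModuleCat.{0} R)) : Set (ModuleCat.{0} R) :=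
  {M | ∀ X ∈ 𝒳, torV R X M 1}

/-- `(ℰ, 𝒞)` is a Tor-pair. -/
def IsTorPair (R : Type) [CommRing R] (ℰ 𝒞 : Set (ModuleCat.{0} R)) : Prop :=
  ℰ = torLeft1 R 𝒞 ∧ 𝒞 = torRight1 R ℰ

/-- `(ℰ, 𝒞)` is a hereditary Tor-pair: all higher Tor-groups vanish as well. -/
def IsHereditaryTorPair (R : Type) [CommRing R] (ℰ 𝒞 : Set (ModuleCat.{0} R)) : Prop :=
  IsTorPair R ℰ 𝒞 ∧ ∀ X ∈ ℰ, ∀ Y ∈ 𝒞, ∀ i : ℕ, 1 ≤ i → torV R X Y i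

/-- The class `𝒞_(i) = {M ∣ Tor_j(E, M) = 0 for all j > i and all E ∈ ℰ}`. -/
def torShift (R : Type) [CommRing R] (ℰ : Set (ModuleCat.{0} R)) (i : ℕ) :
    Set (ModuleCat.{0} R) :=
  {M | ∀ X ∈ ℰ, ∀ j : ℕ, i < j → torV R X M j}

/-!
Localization is an exact monoidal functor preserving projectives, so it commutes with
`Tor`. When one argument of `Tor` is already an `R_S`-module, `S` acts invertibly on the `Tor`
group, which is therefore unchanged by localization. Together, `Tor` over `R_S` of `M_S` and an
`R_S`-module `Y` vanishes exactly when `Tor` over `R` of `M` and `Y` does. So being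
`Tor`-orthogonal to `𝒳_S` over `R_S` means being `Tor`-orthogonal to `𝒳` over `R`, and a class
which is a `Tor`-orthogonal is stable under `M ↦ M_S`.
-/

namespace TorLocalization

open MonoidalCategory Limits

universe u

section LeftDerived

variable {𝒜 ℬ 𝒟 : Type*} [Category* 𝒜] [Category* ℬ] [Category* 𝒟]
  [Abelian 𝒜] [HasProjectiveResolutions 𝒜] [Abelian ℬ] [Abelian 𝒟]

/-- Left derived functors commute with postcomposition by an exact functor. -/
def leftDerivedObjCompExact (G : 𝒜 ⥤ ℬ) [G.Additive] (F : ℬ ⥤ 𝒟) [F.Additive]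
    [F.PreservesHomology] (n : ℕ) (X : 𝒜) :
    ((G ⋙ F).leftDerived n).obj X ≅ F.obj ((G.leftDerived n).obj X) :=
  let P := projectiveResolution X
  P.isoLeftDerivedObj (G ⋙ F) n ≪≫
    (((G.mapHomologicalComplex _).obj P.complex).sc n).mapHomologyIso F ≪≫
    F.mapIso (P.isoLeftDerivedObj G n).symm

/-- Left derived functors commute with precomposition by an exact functor which preserves
projective objects. -/
def leftDerivedObjExactComp [HasProjectiveResolutions ℬ] (F : 𝒜 ⥤ ℬ) [F.Additive]
    [F.PreservesHomology] [F.PreservesProjectiveObjects] (G : ℬ ⥤ 𝒟) [G.Additive]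
    (n : ℕ) (X : 𝒜) :
    ((F ⋙ G).leftDerived n).obj X ≅ (G.leftDerived n).obj (F.obj X) :=
  let P := projectiveResolution X
  P.isoLeftDerivedObj (F ⋙ G) n ≪≫
    ((F.mapProjectiveResolution P).isoLeftDerivedObj G n).symm

/-- Isomorphic functors have isomorphic left derived functors. -/
def leftDerivedNatIso {F G : 𝒜 ⥤ ℬ} [F.Additive] [G.Additive] (α : F ≅ G) (n : ℕ) :
    F.leftDerived n ≅ G.leftDerived n where
  hom := NatTrans.leftDerived α.hom n
  inv := NatTrans.leftDerived α.inv n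
  hom_inv_id := by rw [← NatTrans.leftDerived_comp, α.hom_inv_id, NatTrans.leftDerived_id]
  inv_hom_id := by rw [← NatTrans.leftDerived_comp, α.inv_hom_id, NatTrans.leftDerived_id]

variable {R : Type*} [Semiring R] [Linear R ℬ]

instance homologyFunctor_linear {ι : Type*} (c : ComplexShape ι) (i : ι) :
    (HomologicalComplex.homologyFunctor ℬ c i).Linear R where
  map_smul f r := ShortComplex.homologyMap_smul
    ((HomologicalComplex.shortComplexFunctor ℬ c i).map f) r

lemma leftDerived_smul {F G : 𝒜 ⥤ ℬ} [F.Additive] [G.Additive] (α : F ⟶ G) (r : R) (n : ℕ) :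
    NatTrans.leftDerived (r • α) n = r • NatTrans.leftDerived α n := by
  ext X
  let P := projectiveResolution X
  have hP : (NatTrans.mapHomologicalComplex (r • α) (ComplexShape.down ℕ)).app P.complex =
      r • (NatTrans.mapHomologicalComplex α _).app P.complex := rfl
  rw [NatTrans.app_smul, P.leftDerived_app_eq, P.leftDerived_app_eq, hP]
  simp only [Functor.map_smul, Linear.smul_comp, Linear.comp_smul]

instance leftDerived_linear [Linear R 𝒜] (F : 𝒜 ⥤ ℬ) [F.Additive] [F.Linear R] (n : ℕ) :
    (F.leftDerived n).Linear R where
  map_smul {X Y} f r := by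
    let P := projectiveResolution X
    let Q := projectiveResolution Y
    let g := ProjectiveResolution.lift f P Q
    have hg : g.f 0 ≫ Q.π.f 0 = P.π.f 0 ≫ f := ProjectiveResolution.lift_commutes_zero f P Q
    have hrg : (r • g).f 0 ≫ Q.π.f 0 = P.π.f 0 ≫ (r • f) :=
      (Linear.smul_comp ..).trans ((congrArg (r • ·) hg).trans (Linear.comp_smul ..).symm)
    rw [← cancel_mono (Q.isoLeftDerivedObj F n).hom, Linear.smul_comp,
      ProjectiveResolution.isoLeftDerivedObj_hom_naturality f P Q g hg,
      ProjectiveResolution.isoLeftDerivedObj_hom_naturality (r • f) P Q (r • g) hrg,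
      Functor.map_smul, Linear.comp_smul]

end LeftDerived

section Tor

variable {𝒜 ℬ : Type*} [Category* 𝒜] [MonoidalCategory 𝒜] [Abelian 𝒜] [MonoidalPreadditive 𝒜]
  [HasProjectiveResolutions 𝒜] [Category* ℬ] [MonoidalCategory ℬ] [Abelian ℬ]
  [MonoidalPreadditive ℬ] [HasProjectiveResolutions ℬ]

/-- An exact monoidal functor which preserves projective objects commutes with `Tor`. -/
def torObjIso (F : 𝒜 ⥤ ℬ) [F.Monoidal] [F.Additive] [F.PreservesHomology]
    [F.PreservesProjectiveObjects] (n : ℕ) (X Y : 𝒜) :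
    ((Tor ℬ n).obj (F.obj X)).obj (F.obj Y) ≅ F.obj (((Tor 𝒜 n).obj X).obj Y) :=
  let α : F ⋙ (tensoringLeft ℬ).obj (F.obj X) ≅ (tensoringLeft 𝒜).obj X ⋙ F :=
    Functor.Monoidal.commTensorLeft F X
  (leftDerivedObjExactComp F ((tensoringLeft ℬ).obj (F.obj X)) n Y).symm ≪≫
    (leftDerivedNatIso α n).app Y ≪≫
    leftDerivedObjCompExact ((tensoringLeft 𝒜).obj X) F n Y

variable {R : Type*} [Semiring R] [Linear R 𝒜] [MonoidalLinear R 𝒜]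

instance tor_obj_linear (n : ℕ) (X : 𝒜) : ((Tor 𝒜 n).obj X).Linear R :=
  inferInstanceAs ((((tensoringLeft 𝒜).obj X).leftDerived n).Linear R)

instance tor_linear (n : ℕ) : (Tor 𝒜 n).Linear R where
  map_smul f r := by
    have h : (tensoringLeft 𝒜).map (r • f) = r • (tensoringLeft 𝒜).map f := by
      ext Z
      exact MonoidalLinear.smul_whiskerRight r f Z
    exact (congrArg (NatTrans.leftDerived · n) h).trans (leftDerived_smul _ r n)

end Tor

section IsSLocal

variable {R : Type*} [Semiring R] {S : Submonoid R} {𝒜 ℬ : Type*}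
  [Category* 𝒜] [Preadditive 𝒜] [Linear R 𝒜] [Category* ℬ] [Preadditive ℬ] [Linear R ℬ]

/-- An object of an `R`-linear category is `S`-local if `S` acts on it by isomorphisms; among
`R`-modules these are the ones which come from `R_S`-modules. -/
def IsSLocal (S : Submonoid R) (X : 𝒜) : Prop :=
  ∀ s ∈ S, IsIso (s • 𝟙 X)

lemma IsSLocal.map {X : 𝒜} (hX : IsSLocal S X) (F : 𝒜 ⥤ ℬ) [F.Linear R] :
    IsSLocal S (F.obj X) := fun s hs => by
  have := hX s hs
  rw [← F.map_id, ← F.map_smul]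
  infer_instance

instance evaluation_obj_linear (X : 𝒜) : ((evaluation 𝒜 ℬ).obj X).Linear R where

end IsSLocal

section ExtendScalars

variable {R A : Type u} [CommRing R] [CommRing A]

instance extendScalars_preservesProjectiveObjects (f : R →+* A) :
    (ModuleCat.extendScalars.{u, u, u} f).PreservesProjectiveObjects :=
  Functor.preservesProjectiveObjects_of_adjunction_of_preservesEpimorphisms
    (ModuleCat.extendRestrictScalarsAdj f)

instance extendScalars_additive (f : R →+* A) : (ModuleCat.extendScalars.{u, u, u} f).Additive :=
  (ModuleCat.extendRestrictScalarsAdj f).left_adjoint_additive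

lemma preservesHomology_extendScalars {f : R →+* A} (hf : f.Flat) :
    (ModuleCat.extendScalars.{u, u, u} f).PreservesHomology := by
  have := ModuleCat.preservesFiniteLimits_extendScalars_of_flat hf
  infer_instance

variable [Algebra R A] (S : Submonoid R) [IsLocalization S A]

/-- Any localization of the `R`-module `M` at `S` computes its extension of scalars to `R_S`. -/
def extendScalarsIso {M : ModuleCat.{u} R} {N : Type u} [AddCommGroup N] [Module R N] [Module A N]
    [IsScalarTower R A N] (g : M →ₗ[R] N) (hg : IsLocalizedModule S g) :
    (ModuleCat.extendScalars (algebraMap R A)).obj M ≅ ModuleCat.of A N := by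
  -- `extendScalars` tensors along `(algebraMap R A).toAlgebra`, which is only propositionally
  -- the given algebra structure.
  have h : (algebraMap R A).toAlgebra = ‹Algebra R A› := Algebra.algebra_ext _ _ fun _ => rfl
  have hA : @IsLocalization R _ S A _ (algebraMap R A).toAlgebra := by rwa [h]
  have hN : @IsScalarTower R A N (algebraMap R A).toAlgebra.toSMul _ _ := by rwa [h]
  let := (algebraMap R A).toAlgebra
  exact (IsLocalizedModule.isBaseChange S A g).equiv.toModuleIso

/-- An `R_S`-module is its own localization. -/
def extendRestrictScalarsIso (X : ModuleCat.{u} A) :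
    (ModuleCat.extendScalars (algebraMap R A)).obj
      ((ModuleCat.restrictScalars (algebraMap R A)).obj X) ≅ X :=
  let _ : Module R X := Module.compHom X (algebraMap R A)
  have : IsScalarTower R A X := .of_algebraMap_smul fun _ _ => rfl
  extendScalarsIso S (.id : X →ₗ[R] X) (isLocalizedModule_id S X A)

lemma isSLocal_restrictScalars (X : ModuleCat.{u} A) :
    IsSLocal S ((ModuleCat.restrictScalars (algebraMap R A)).obj X) := fun s hs => by
  obtain ⟨u, hu⟩ := IsLocalization.map_units A ⟨s, hs⟩
  have : IsIso ((u : A) • 𝟙 X) :=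
    ⟨(↑u⁻¹ : A) • 𝟙 X, by simp [smul_smul], by simp [smul_smul]⟩
  have h : s • 𝟙 ((ModuleCat.restrictScalars (algebraMap R A)).obj X) =
      (ModuleCat.restrictScalars (algebraMap R A)).map ((u : A) • 𝟙 X) := by
    rw [hu]
    rfl
  rw [h]
  infer_instance

end ExtendScalars

section Localization

variable {R : Type u} [CommRing R] (S : Submonoid R)

/-- The functor `M ↦ M_S`, as an extension of scalars. -/
abbrev localizationFunctor : ModuleCat.{u} R ⥤ ModuleCat.{u} (Localization S) :=
  ModuleCat.extendScalars (algebraMap R (Localization S))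

/-- The functor regarding an `R_S`-module as an `R`-module. -/
abbrev restrictionFunctor : ModuleCat.{u} (Localization S) ⥤ ModuleCat.{u} R :=
  ModuleCat.restrictScalars (algebraMap R (Localization S))

instance localizationFunctor_preservesHomology : (localizationFunctor S).PreservesHomology :=
  preservesHomology_extendScalars (RingHom.flat_algebraMap_iff.mpr (IsLocalization.flat _ S))

/-- The functorial localization agrees with Mathlib's `LocalizedModule`. -/
def localizationFunctorObjIso (M : ModuleCat.{u} R) :
    (localizationFunctor S).obj M ≅ ModuleCat.of (Localization S) (LocalizedModule S M) :=
  extendScalarsIso S (LocalizedModule.mkLinearMap S M) inferInstance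

variable {S}

lemma subsingleton_localizationFunctor_obj_iff {M : ModuleCat.{u} R} :
    Subsingleton ((localizationFunctor S).obj M) ↔ ∀ m : M, ∃ s ∈ S, s • m = 0 :=
  (localizationFunctorObjIso S M).toLinearEquiv.toEquiv.subsingleton_congr.trans
    LocalizedModule.subsingleton_iff

lemma IsSLocal.subsingleton_localizationFunctor_obj_iff {M : ModuleCat.{u} R}
    (hM : IsSLocal S M) : Subsingleton ((localizationFunctor S).obj M) ↔ Subsingleton M := by
  rw [TorLocalization.subsingleton_localizationFunctor_obj_iff]
  refine ⟨fun h => subsingleton_of_forall_eq 0 fun m => ?_,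
    fun _ m => ⟨1, S.one_mem, Subsingleton.elim _ _⟩⟩
  obtain ⟨s, hs, hsm⟩ := h m
  have := hM s hs
  exact (ConcreteCategory.bijective_of_isIso (s • 𝟙 M)).1 (hsm.trans (smul_zero s).symm)

end Localization

section TorVanishing

variable {R : Type} [CommRing R] {S : Submonoid R}

lemma torV_congr {M M' N N' : ModuleCat.{0} R} (e : M ≅ M') (f : N ≅ N') (n : ℕ) :
    torV R M N n ↔ torV R M' N' n :=
  (((Tor (ModuleCat.{0} R) n).obj M).mapIso f ≪≫
    ((Tor (ModuleCat.{0} R) n).mapIso e).app N').toLinearEquiv.toEquiv.subsingleton_congr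

lemma torV_localization_iff {M N : ModuleCat.{0} R} {n : ℕ} :
    torV (Localization S) ((localizationFunctor S).obj M) ((localizationFunctor S).obj N) n ↔
      Subsingleton ((localizationFunctor S).obj (((Tor (ModuleCat.{0} R) n).obj M).obj N)) :=
  (torObjIso (localizationFunctor S) n M N).toLinearEquiv.toEquiv.subsingleton_congr

lemma torV_localization {M N : ModuleCat.{0} R} {n : ℕ} (h : torV R M N n) :
    torV (Localization S) ((localizationFunctor S).obj M) ((localizationFunctor S).obj N) n :=
  torV_localization_iff.2 <| subsingleton_localizationFunctor_obj_iff.2 fun _ =>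
    ⟨1, S.one_mem, h.elim _ _⟩

lemma torV_localization_left_iff {M : ModuleCat.{0} R} {Y : ModuleCat.{0} (Localization S)}
    {n : ℕ} :
    torV (Localization S) ((localizationFunctor S).obj M) Y n ↔
      torV R M ((restrictionFunctor S).obj Y) n := by
  have hY := (isSLocal_restrictScalars S Y).map ((Tor (ModuleCat.{0} R) n).obj M)
  rw [← torV_congr (Iso.refl _) (extendRestrictScalarsIso S Y), torV_localization_iff,
    hY.subsingleton_localizationFunctor_obj_iff, torV]

lemma torV_localization_right_iff {X : ModuleCat.{0} (Localization S)} {N : ModuleCat.{0} R}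
    {n : ℕ} :
    torV (Localization S) X ((localizationFunctor S).obj N) n ↔
      torV R ((restrictionFunctor S).obj X) N n := by
  have hX : IsSLocal S (((Tor (ModuleCat.{0} R) n).obj ((restrictionFunctor S).obj X)).obj N) :=
    ((isSLocal_restrictScalars S X).map (Tor (ModuleCat.{0} R) n)).map ((evaluation _ _).obj N)
  rw [← torV_congr (extendRestrictScalarsIso S X) (Iso.refl _), torV_localization_iff,
    hX.subsingleton_localizationFunctor_obj_iff, torV]

end TorVanishing

section Classes

variable {R : Type} [CommRing R] {S : Submonoid R} {𝒳 : Set (ModuleCat.{0} R)}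

/-- A class of `R`-modules which is closed under isomorphism and contains `M_S`, regarded as an
`R`-module, along with each `M`. -/
structure IsLocalizationClosed (S : Submonoid R) (𝒳 : Set (ModuleCat.{0} R)) : Prop where
  of_iso {M N : ModuleCat.{0} R} (e : M ≅ N) (hM : M ∈ 𝒳) : N ∈ 𝒳
  localize {M : ModuleCat.{0} R} (hM : M ∈ 𝒳) :
    (restrictionFunctor S).obj ((localizationFunctor S).obj M) ∈ 𝒳

lemma mem_locClass_iff {X : ModuleCat.{0} (Localization S)} :
    X ∈ locClass R S 𝒳 ↔ ∃ M ∈ 𝒳, Nonempty (X ≅ (localizationFunctor S).obj M) := by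
  refine exists_congr fun M => and_congr_right fun _ => ?_
  exact ⟨fun ⟨e⟩ => ⟨e ≪≫ (localizationFunctorObjIso S M).symm⟩,
    fun ⟨e⟩ => ⟨e ≪≫ localizationFunctorObjIso S M⟩⟩

lemma localizationFunctor_obj_mem_locClass {M : ModuleCat.{0} R} (hM : M ∈ 𝒳) :
    (localizationFunctor S).obj M ∈ locClass R S 𝒳 :=
  mem_locClass_iff.2 ⟨M, hM, ⟨Iso.refl _⟩⟩

lemma IsLocalizationClosed.locClass_eq_resClass (h𝒳 : IsLocalizationClosed S 𝒳) :
    locClass R S 𝒳 = resClass R S 𝒳 := by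
  ext X
  rw [mem_locClass_iff]
  constructor
  · rintro ⟨M, hM, ⟨e⟩⟩
    exact h𝒳.of_iso ((restrictionFunctor S).mapIso e.symm) (h𝒳.localize hM)
  · exact fun hX => ⟨_, hX, ⟨(extendRestrictScalarsIso S X).symm⟩⟩

/-- The modules `M` with `Tor_n(X, M) = 0` for all `X ∈ 𝒳` and all degrees `n ∈ J`; this covers
both `torRight1` (for `J = {1}`) and `torShift` (for `J = Set.Ioi i`). -/
def rightTorOrthogonal (J : Set ℕ) (𝒳 : Set (ModuleCat.{0} R)) : Set (ModuleCat.{0} R) :=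
  {M | ∀ X ∈ 𝒳, ∀ n ∈ J, torV R X M n}

lemma torRight1_eq_rightTorOrthogonal : torRight1 R 𝒳 = rightTorOrthogonal {1} 𝒳 := by
  simp only [torRight1, rightTorOrthogonal, Set.mem_singleton_iff, forall_eq]

lemma isLocalizationClosed_torLeft1 : IsLocalizationClosed S (torLeft1 R 𝒳) where
  of_iso e hM X hX := (torV_congr e (Iso.refl X) 1).1 (hM X hX)
  localize hM X hX := torV_localization_right_iff.1 (torV_localization (hM X hX))

lemma isLocalizationClosed_rightTorOrthogonal (J : Set ℕ) :
    IsLocalizationClosed S (rightTorOrthogonal J 𝒳) where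
  of_iso e hM X hX n hn := (torV_congr (Iso.refl X) e n).1 (hM X hX n hn)
  localize hM X hX n hn := torV_localization_left_iff.1 (torV_localization (hM X hX n hn))

lemma torLeft1_locClass :
    torLeft1 (Localization S) (locClass R S 𝒳) = locClass R S (torLeft1 R 𝒳) := by
  rw [isLocalizationClosed_torLeft1.locClass_eq_resClass]
  ext X
  refine ⟨fun h N hN => torV_localization_right_iff.1
    (h _ (localizationFunctor_obj_mem_locClass hN)), fun h Y hY => ?_⟩
  obtain ⟨N, hN, ⟨e⟩⟩ := mem_locClass_iff.1 hY
  exact (torV_congr (Iso.refl X) e 1).2 (torV_localization_right_iff.2 (h N hN))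

lemma rightTorOrthogonal_locClass (J : Set ℕ) :
    rightTorOrthogonal J (locClass R S 𝒳) = locClass R S (rightTorOrthogonal J 𝒳) := by
  rw [(isLocalizationClosed_rightTorOrthogonal J).locClass_eq_resClass]
  ext Y
  refine ⟨fun h M hM n hn => torV_localization_left_iff.1
    (h _ (localizationFunctor_obj_mem_locClass hM) n hn), fun h X hX n hn => ?_⟩
  obtain ⟨M, hM, ⟨e⟩⟩ := mem_locClass_iff.1 hX
  exact (torV_congr e (Iso.refl Y) n).2 (torV_localization_left_iff.2 (h M hM n hn))

lemma torRight1_locClass :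
    torRight1 (Localization S) (locClass R S 𝒳) = locClass R S (torRight1 R 𝒳) := by
  simp only [torRight1_eq_rightTorOrthogonal, rightTorOrthogonal_locClass]

lemma torShift_locClass (i : ℕ) :
    torShift (Localization S) (locClass R S 𝒳) i = locClass R S (torShift R 𝒳 i) :=
  rightTorOrthogonal_locClass (Set.Ioi i)

end Classes

section TorPair

variable {R : Type} [CommRing R] {S : Submonoid R} {ℰ 𝒞 : Set (ModuleCat.{0} R)}

lemma isTorPair_locClass (h : IsTorPair R ℰ 𝒞) :
    IsTorPair (Localization S) (locClass R S ℰ) (locClass R S 𝒞) :=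
  ⟨by rw [torLeft1_locClass, ← h.1], by rw [torRight1_locClass, ← h.2]⟩

lemma isLocalizationClosed_left (h : IsTorPair R ℰ 𝒞) : IsLocalizationClosed S ℰ :=
  h.1 ▸ isLocalizationClosed_torLeft1

lemma isLocalizationClosed_right (h : IsTorPair R ℰ 𝒞) : IsLocalizationClosed S 𝒞 := by
  rw [h.2, torRight1_eq_rightTorOrthogonal]
  exact isLocalizationClosed_rightTorOrthogonal {1}

end TorPair

end TorLocalization

open TorLocalization in
theorem stmt3_general (R : Type) [CommRing R] (S : Submonoid R)
    (ℰ 𝒞 : Set (ModuleCat.{0} R)) (h : IsTorPair R ℰ 𝒞) :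
    (IsTorPair (Localization S) (locClass R S ℰ) (locClass R S 𝒞) ∧
      locClass R S ℰ = resClass R S ℰ ∧ locClass R S 𝒞 = resClass R S 𝒞) ∧
    ∀ i : ℕ,
      torShift (Localization S) (locClass R S ℰ) i = locClass R S (torShift R ℰ i) ∧
      torLeft1 (Localization S) (torShift (Localization S) (locClass R S ℰ) i) =
        locClass R S (torLeft1 R (torShift R ℰ i)) :=
  ⟨⟨isTorPair_locClass h, (isLocalizationClosed_left h).locClass_eq_resClass,
      (isLocalizationClosed_right h).locClass_eq_resClass⟩,
    fun i => ⟨torShift_locClass i, by rw [torShift_locClass, torLeft1_locClass]⟩⟩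

/-- localization of a Tor-pair is a Tor-pair, the localized classes consist
precisely of the `R_S`-modules lying in the original classes, and in the hereditary case
the shifted Tor-pairs localize accordingly. -/
theorem stmt3 (R : Type) [CommRing R] (S : Submonoid R)
    (ℰ 𝒞 : Set (ModuleCat.{0} R)) (h : IsTorPair R ℰ 𝒞) :
    (IsTorPair (Localization S) (locClass R S ℰ) (locClass R S 𝒞) ∧
      locClass R S ℰ = resClass R S ℰ ∧ locClass R S 𝒞 = resClass R S 𝒞) ∧
    (IsHereditaryTorPair R ℰ 𝒞 → ∀ i : ℕ,
      torShift (Localization S) (locClass R S ℰ) i = locClass R S (torShift R ℰ i) ∧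
      torLeft1 (Localization S) (torShift (Localization S) (locClass R S ℰ) i) =
        locClass R S (torLeft1 R (torShift R ℰ i))) :=
  ⟨(stmt3_general R S ℰ 𝒞 h).1, fun _ => (stmt3_general R S ℰ 𝒞 h).2⟩
end
end

section
/- Let R be a commutative noetherian ring and C a cotorsion R-module. If Hom_R(R_m, C) = 0 for every maximal ideal m of R, then C = 0. -/
open CategoryTheory Opposite

noncomputable section

/-- An `R`-module `C` is cotorsion if `Ext^1_R(F, C) = 0` for every flat `R`-module `F`. -/
def IsCotorsionModule (R : Type) [CommRing R] (C : Type) [AddCommGroup C] [Module R C] : Prop :=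
  ∀ (F : Type) [AddCommGroup F] [Module R F], Module.Flat R F →
    extV R (ModuleCat.of R F) (ModuleCat.of R C) 1

/-!
Let `Q` be the product of the localizations of `R` at its primes. Over a coherent ring products of
flat modules are flat, so `Q` is faithfully flat and the cokernel of `R → Q` is flat. Since `C` is
cotorsion, every element of `C` is therefore the value at `1` of some `f : Q → C`, and it suffices
to show `f = 0`.

By noetherian induction on closed subsets `Z` of the spectrum, `f` kills the vectors supported on
`Z`. If `Z` is irreducible with generic point `x`, then by the induction hypothesis `f` depends only
on the germ at `x` of such a vector, since a vector of zero germ is supported on a smaller closed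
set. An element outside `x` is a unit at all primes close to `x`, so germs form a module over `R_x`,
hence over `R_𝔪` for a maximal ideal `𝔪 ⊇ x`, and every homomorphism from an `R_𝔪`-module to `C` is
zero.
-/

open TopologicalSpace Topology

section Ext

variable {R : Type} [CommRing R]

lemma subsingleton_ext_succ_of_extV {X Y : ModuleCat.{0} R} {n : ℕ} (h : extV R X Y (n + 1)) :
    Subsingleton (Abelian.Ext X Y (n + 1)) := by
  let P := projectiveResolution X
  have exact_yoneda : (P.complex.linearYonedaObj ℤ Y).ExactAt (n + 1) := by
    rw [HomologicalComplex.exactAt_iff_isZero_homology]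
    exact (@ModuleCat.isZero_of_subsingleton _ _ _ h).of_iso (P.isoExt (n + 1) Y).symm
  rw [HomologicalComplex.exactAt_iff' _ n (n + 1) (n + 2) (by simp) (by simp),
    ShortComplex.moduleCat_exact_iff] at exact_yoneda
  refine subsingleton_of_forall_eq 0 fun α ↦ ?_
  obtain ⟨φ, hφ, rfl⟩ := P.extMk_surjective α (n + 2) rfl
  exact (P.extMk_eq_zero_iff φ (n + 2) rfl hφ n rfl).2 (exact_yoneda φ hφ)

lemma exists_comp_eq_of_subsingleton_ext {𝒜 : Type*} [Category* 𝒜] [Abelian 𝒜] [HasExt 𝒜]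
    {S : ShortComplex 𝒜} (hS : S.ShortExact) {Y : 𝒜}
    [Subsingleton (Abelian.Ext S.X₃ Y 1)] (g : S.X₁ ⟶ Y) : ∃ g' : S.X₂ ⟶ Y, S.f ≫ g' = g := by
  obtain ⟨β, hβ⟩ := Abelian.Ext.contravariant_sequence_exact₁ hS Y (Abelian.Ext.mk₀ g)
    (add_zero 1) (Subsingleton.elim _ _)
  obtain ⟨g', rfl⟩ := (Abelian.Ext.mk₀_bijective S.X₂ Y).2 β
  exact ⟨g', (Abelian.Ext.mk₀_bijective S.X₁ Y).1 (by rw [← hβ, Abelian.Ext.mk₀_comp_mk₀])⟩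

lemma IsCotorsionModule.exists_comp_eq {A B C : Type} [AddCommGroup A] [Module R A]
    [AddCommGroup B] [Module R B] [AddCommGroup C] [Module R C] (hC : IsCotorsionModule R C)
    {i : A →ₗ[R] B} (hi : Function.Injective i) [Module.Flat R (B ⧸ i.range)] (g : A →ₗ[R] C) :
    ∃ g' : B →ₗ[R] C, g' ∘ₗ i = g := by
  let S := ModuleCat.shortComplexOfCompEqZero i i.range.mkQ (LinearMap.range_mkQ_comp i)
  have hS : S.ShortExact := ModuleCat.shortComplex_shortExact S
    (LinearMap.exact_map_mkQ_range i) hi (Submodule.mkQ_surjective _)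
  have : Subsingleton (Abelian.Ext S.X₃ (ModuleCat.of R C) 1) :=
    subsingleton_ext_succ_of_extV (hC (B ⧸ i.range) inferInstance)
  obtain ⟨g', hg'⟩ := exists_comp_eq_of_subsingleton_ext hS (ModuleCat.ofHom g)
  exact ⟨g'.hom, congrArg ModuleCat.Hom.hom hg'⟩

end Ext

section Flat

/-- A commutative ring is coherent if its finitely generated ideals are finitely presented; over
such a ring, products of flat modules are flat. -/
class IsCoherentRing (R : Type*) [CommRing R] : Prop where
  finitePresentation_of_fg (I : Ideal R) : I.FG → Module.FinitePresentation R I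

instance isCoherentRing_of_isNoetherianRing (R : Type*) [CommRing R] [IsNoetherianRing R] :
    IsCoherentRing R :=
  ⟨fun _ _ ↦ Module.finitePresentation_of_finite R _⟩

variable {R : Type*} [CommRing R]

lemma IsCoherentRing.fg_ker [IsCoherentRing R] {M : Type*} [AddCommGroup M] [Module R M]
    [Module.Finite R M] (φ : M →ₗ[R] R) : φ.ker.FG := by
  have := IsCoherentRing.finitePresentation_of_fg φ.range (Module.Finite.iff_fg.1 inferInstance)
  rw [← φ.ker_rangeRestrict]
  exact Module.FinitePresentation.fg_ker _ φ.surjective_rangeRestrict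

-- By coherence, finitely many functionals generate those vanishing at `v`; they are the
-- coordinates of `a`.
lemma IsCoherentRing.exists_universal_apply_eq_zero [IsCoherentRing R] {N : Type*}
    [AddCommGroup N] [Module R N] [Module.Free R N] [Module.Finite R N] (v : N) :
    ∃ (k : ℕ) (a : N →ₗ[R] (Fin k →₀ R)), a v = 0 ∧
      ∀ {n : ℕ} (b : N →ₗ[R] (Fin n →₀ R)), b v = 0 →
        ∃ c : (Fin k →₀ R) →ₗ[R] (Fin n →₀ R), b = c ∘ₗ a := by
  obtain ⟨k, φ, hφ⟩ := Submodule.fg_iff_exists_fin_generating_family.1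
    (IsCoherentRing.fg_ker (Module.Dual.eval R N v))
  let e (n : ℕ) := Finsupp.linearEquivFunOnFinite R R (Fin n)
  have φ_apply_v (t : Fin k) : φ t v = 0 := by
    have : φ t ∈ (Module.Dual.eval R N v).ker := hφ ▸ Submodule.subset_span ⟨t, rfl⟩
    exact this
  refine ⟨k, (e k).symm ∘ₗ LinearMap.pi φ, ?_, fun {n} b hb ↦ ?_⟩
  · ext t
    exact φ_apply_v t
  · have exists_coeff (j : Fin n) : ∃ d : Fin k → R, ∑ t, d t • φ t = Finsupp.lapply j ∘ₗ b := by
      rw [← Submodule.mem_span_range_iff_exists_fun, hφ]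
      exact DFunLike.congr_fun hb j
    choose d hd using exists_coeff
    refine ⟨(e n).symm ∘ₗ Matrix.mulVecLin (Matrix.of d) ∘ₗ e k, ?_⟩
    ext u j
    have := LinearMap.congr_fun (hd j) u
    simpa [e, Matrix.mulVec, dotProduct] using this.symm

instance flat_pi [IsCoherentRing R] {ι : Type*} (M : ι → Type*) [∀ i, AddCommGroup (M i)]
    [∀ i, Module R (M i)] [∀ i, Module.Flat R (M i)] : Module.Flat R (∀ i, M i) := by
  refine Module.Flat.of_forall_exists_factorization fun {l v x} hxv ↦ ?_
  obtain ⟨k, a, hav, universal⟩ := IsCoherentRing.exists_universal_apply_eq_zero (R := R) v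
  have factor (i : ι) : ∃ y : (Fin k →₀ R) →ₗ[R] M i, LinearMap.proj i ∘ₗ x = y ∘ₗ a := by
    obtain ⟨n, b, y, hy, hbv⟩ := Module.Flat.exists_factorization_of_apply_eq_zero_of_free
      (x := LinearMap.proj i ∘ₗ x) (congrFun hxv i)
    obtain ⟨c, rfl⟩ := universal b hbv
    exact ⟨y ∘ₗ c, hy⟩
  choose y hy using factor
  have x_eq : x = LinearMap.pi y ∘ₗ a :=
    LinearMap.ext fun u ↦ funext fun i ↦ LinearMap.congr_fun (hy i) u
  exact ⟨k, a, LinearMap.pi y, x_eq, hav⟩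

lemma flat_quotient_range_algebraLinearMap (B : Type*) [CommRing B] [Algebra R B]
    [Module.FaithfullyFlat R B] : Module.Flat R (B ⧸ (Algebra.linearMap R B).range) := by
  -- A relation in `B / R` lifts to `x' v = r` with `r ∈ R`. Since `IB ∩ R = I` for the ideal `I`
  -- of values of functionals at `v`, subtracting an `R`-valued map from `x'` gives a relation in
  -- the flat module `B`.
  let π := (Algebra.linearMap R B).range.mkQ
  refine Module.Flat.of_forall_exists_factorization fun {l v x} hxv ↦ ?_
  obtain ⟨x', rfl⟩ := Module.projective_lifting_property π x (Submodule.mkQ_surjective _)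
  obtain ⟨r, hr⟩ : x' v ∈ (Algebra.linearMap R B).range := by simpa [π] using hxv
  let I : Ideal R := (Module.Dual.eval R (Fin l →₀ R) v).range
  have coord_mem (i : Fin l) : v i ∈ I := ⟨Finsupp.lapply i, rfl⟩
  have r_mem : r ∈ I := by
    rw [← Ideal.comap_map_eq_self_of_faithfullyFlat (B := B) I, Ideal.mem_comap,
      ← Algebra.linearMap_apply, hr, ← v.univ_sum_single, map_sum]
    refine Ideal.sum_mem _ fun i _ ↦ ?_
    rw [← Finsupp.smul_single_one, map_smul, Algebra.smul_def]
    exact Ideal.mul_mem_right _ _ (Ideal.mem_map_of_mem _ (coord_mem i))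
  obtain ⟨c, hc : c v = r⟩ := r_mem
  obtain ⟨k, a, y, hy, hav⟩ := Module.Flat.exists_factorization_of_apply_eq_zero_of_free
    (x := x' - Algebra.linearMap R B ∘ₗ c) (f := v) (by simp [← hr, hc])
  refine ⟨k, a, π ∘ₗ y, ?_, hav⟩
  rw [LinearMap.comp_assoc, ← hy, LinearMap.comp_sub, ← LinearMap.comp_assoc,
    LinearMap.range_mkQ_comp, LinearMap.zero_comp, sub_zero]

instance faithfullyFlat_pi_localization [IsCoherentRing R] :
    Module.FaithfullyFlat R (∀ p : PrimeSpectrum R, Localization.AtPrime p.asIdeal) := by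
  refine Module.FaithfullyFlat.of_comap_surjective fun p ↦ ?_
  let ev := Pi.evalRingHom (fun q : PrimeSpectrum R ↦ Localization.AtPrime q.asIdeal) p
  refine ⟨PrimeSpectrum.comap ev (IsLocalRing.closedPoint _), ?_⟩
  ext1
  exact Localization.AtPrime.under_maximalIdeal

end Flat

section Germ

variable {R : Type*} [CommRing R] {ι : Type*} (M : ι → Type*) [∀ i, AddCommGroup (M i)]
  [∀ i, Module R (M i)]

variable (R) in
/-- The vectors of a product of modules that vanish eventually along a filter `F` on the index
type; the quotient by this submodule is the reduced product of the family along `F`. -/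
def eventuallyZero (F : Filter ι) : Submodule R (∀ i, M i) where
  carrier := {x | ∀ᶠ i in F, x i = 0}
  zero_mem' := .of_forall fun _ ↦ rfl
  add_mem' hx hy := by
    filter_upwards [hx, hy] with i hxi hyi
    rw [Pi.add_apply, hxi, hyi, add_zero]
  smul_mem' r x hx := by
    filter_upwards [hx] with i hxi
    rw [Pi.smul_apply, hxi, smul_zero]

lemma isUnit_algebraMap_end_quotient_eventuallyZero {F : Filter ι} {s : R}
    (hs : ∀ᶠ i in F, IsUnit (algebraMap R (Module.End R (M i)) s)) :
    IsUnit (algebraMap R (Module.End R ((∀ i, M i) ⧸ eventuallyZero R M F)) s) := by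
  rw [Module.End.isUnit_iff]
  refine ⟨(injective_iff_map_eq_zero _).2 fun z hz ↦ ?_, fun z ↦ ?_⟩ <;>
    obtain ⟨x, rfl⟩ := Submodule.Quotient.mk_surjective _ z
  · rw [Module.algebraMap_end_apply, ← Submodule.Quotient.mk_smul,
      Submodule.Quotient.mk_eq_zero] at hz
    rw [Submodule.Quotient.mk_eq_zero]
    filter_upwards [hs, hz] with i hsi hzi
    exact (injective_iff_map_eq_zero _).1 ((Module.End.isUnit_iff _).1 hsi).1 (x i) hzi
  · refine ⟨Submodule.Quotient.mk fun i ↦ Ring.inverse (algebraMap R (Module.End R (M i)) s) (x i),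
      ?_⟩
    rw [Module.algebraMap_end_apply, ← Submodule.Quotient.mk_smul, Submodule.Quotient.eq]
    filter_upwards [hs] with i hsi
    exact sub_eq_zero.2 (LinearMap.congr_fun (Ring.mul_inverse_cancel _ hsi) (x i))

open Classical in
variable (R) in
/-- The projection of a product of modules onto the coordinates in `Z`, as an endomorphism: it
replaces the coordinates outside `Z` by zero. -/
def piIndicator (Z : Set ι) : (∀ i, M i) →ₗ[R] ∀ i, M i :=
  LinearMap.pi fun i ↦ if i ∈ Z then LinearMap.proj i else 0

variable {M}

lemma piIndicator_empty : piIndicator R M ∅ = 0 := by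
  simp [piIndicator, LinearMap.pi_zero]

lemma piIndicator_univ : piIndicator R M Set.univ = LinearMap.id := by
  simp [piIndicator]

lemma piIndicator_union (Z W : Set ι) :
    piIndicator R M (Z ∪ W) = piIndicator R M Z + piIndicator R M W ∘ₗ piIndicator R M Zᶜ := by
  ext1 x
  funext i
  by_cases hZ : i ∈ Z <;> by_cases hW : i ∈ W <;> simp [piIndicator, hZ, hW]

lemma piIndicator_sdiff_apply {Z U : Set ι} {x : ∀ i, M i} (hx : ∀ i ∈ U ∩ Z, x i = 0) :
    piIndicator R M (Z \ U) x = piIndicator R M Z x := by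
  funext i
  by_cases hZ : i ∈ Z
  · by_cases hU : i ∈ U
    · simp [piIndicator, hZ, hU, hx i ⟨hU, hZ⟩]
    · simp [piIndicator, hZ, hU]
  · simp [piIndicator, hZ]

end Germ

section Hom

variable {R : Type*} [CommRing R] {C : Type*} [AddCommGroup C] [Module R C]

lemma hom_eq_zero_of_forall_hom_localization_eq_zero (S : Submonoid R) (A : Type*) [CommRing A]
    [Algebra R A] [IsLocalization S A] (hC : ∀ f : A →ₗ[R] C, f = 0)
    {N : Type*} [AddCommGroup N] [Module R N]
    (hN : ∀ s ∈ S, IsUnit (algebraMap R (Module.End R N) s)) (g : N →ₗ[R] C) : g = 0 := by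
  ext x
  let φ : A →ₗ[R] N := IsLocalizedModule.lift S (Algebra.linearMap R A)
    (LinearMap.toSpanSingleton R N x) fun s ↦ hN s s.2
  have φ_one : φ 1 = x := by
    simpa using IsLocalizedModule.lift_apply S (Algebra.linearMap R A)
      (LinearMap.toSpanSingleton R N x) (fun s ↦ hN s s.2) 1
  rw [← φ_one]
  exact LinearMap.congr_fun (hC (g ∘ₗ φ)) 1

variable {M : PrimeSpectrum R → Type*} [∀ p, AddCommGroup (M p)] [∀ p, Module R (M p)]

lemma comp_piIndicator_eq_zero_of_isGenericPoint
    (hM : ∀ p, ∀ s ∉ p.asIdeal, IsUnit (algebraMap R (Module.End R (M p)) s))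
    (hC : ∀ 𝔪 : PrimeSpectrum R, 𝔪.asIdeal.IsMaximal →
      ∀ g : Localization.AtPrime 𝔪.asIdeal →ₗ[R] C, g = 0)
    (f : (∀ p, M p) →ₗ[R] C) {x : PrimeSpectrum R} {Z : Set (PrimeSpectrum R)}
    (hx : IsGenericPoint x Z)
    (ih : ∀ W : Set (PrimeSpectrum R), IsClosed W → W ⊂ Z → f ∘ₗ piIndicator R M W = 0) :
    f ∘ₗ piIndicator R M Z = 0 := by
  have factors : eventuallyZero R M (𝓝[Z] x) ≤ (f ∘ₗ piIndicator R M Z).ker := by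
    intro y hy
    obtain ⟨U, hU, hxU, hUZ⟩ := mem_nhdsWithin.1 hy
    have ssubset : Z \ U ⊂ Z := ⟨Set.sdiff_subset, fun hZ ↦ (hZ hx.mem).2 hxU⟩
    rw [LinearMap.mem_ker, LinearMap.comp_apply, ← piIndicator_sdiff_apply hUZ]
    exact LinearMap.congr_fun (ih _ (hx.isClosed.sdiff hU) ssubset) y
  obtain ⟨𝔪, h𝔪, hx𝔪⟩ := x.asIdeal.exists_le_maximal x.isPrime.ne_top
  have isUnit_of_notMem : ∀ s ∈ 𝔪.primeCompl, IsUnit (algebraMap R (Module.End R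
      ((∀ p, M p) ⧸ eventuallyZero R M (𝓝[Z] x))) s) := fun s hs ↦ by
    refine isUnit_algebraMap_end_quotient_eventuallyZero M (nhdsWithin_le_nhds ?_)
    filter_upwards [(PrimeSpectrum.isOpen_basicOpen (a := s)).mem_nhds fun hsx ↦ hs (hx𝔪 hsx)]
      with p hp using hM p s hp
  have := hom_eq_zero_of_forall_hom_localization_eq_zero 𝔪.primeCompl (Localization.AtPrime 𝔪)
    (hC ⟨𝔪, h𝔪.isPrime⟩ h𝔪) isUnit_of_notMem (Submodule.liftQ _ _ factors)
  rw [← Submodule.liftQ_mkQ _ _ factors, this, LinearMap.zero_comp]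

lemma hom_pi_eq_zero [NoetherianSpace (PrimeSpectrum R)]
    (hM : ∀ p, ∀ s ∉ p.asIdeal, IsUnit (algebraMap R (Module.End R (M p)) s))
    (hC : ∀ 𝔪 : PrimeSpectrum R, 𝔪.asIdeal.IsMaximal →
      ∀ g : Localization.AtPrime 𝔪.asIdeal →ₗ[R] C, g = 0)
    (f : (∀ p, M p) →ₗ[R] C) : f = 0 := by
  suffices comp_eq_zero : ∀ Z : Closeds (PrimeSpectrum R), f ∘ₗ piIndicator R M Z = 0 by
    simpa [piIndicator_univ] using comp_eq_zero ⊤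
  intro Z
  induction Z using WellFoundedLT.induction with | _ Z ih
  obtain rfl | ne_bot := eq_or_ne Z ⊥
  · rw [Closeds.coe_bot, piIndicator_empty, LinearMap.comp_zero]
  by_cases irreducible : IsPreirreducible (Z : Set (PrimeSpectrum R))
  · have isGenericPoint := IsIrreducible.isGenericPoint_genericPoint
      ⟨Closeds.coe_nonempty.2 ne_bot, irreducible⟩ Z.isClosed
    exact comp_piIndicator_eq_zero_of_isGenericPoint hM hC f isGenericPoint
      fun W hW hWZ ↦ ih ⟨W, hW⟩ hWZ
  · simp only [isPreirreducible_iff_isClosed_union_isClosed, not_forall, not_or] at irreducible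
    obtain ⟨Z₁, Z₂, hZ₁, hZ₂, cover, not_le₁, not_le₂⟩ := irreducible
    lift Z₁ to Closeds (PrimeSpectrum R) using hZ₁
    lift Z₂ to Closeds (PrimeSpectrum R) using hZ₂
    have eq_union : (Z : Set (PrimeSpectrum R)) = ↑(Z ⊓ Z₁) ∪ ↑(Z ⊓ Z₂) := by
      rw [Closeds.coe_inf, Closeds.coe_inf, ← Set.inter_union_distrib_left,
        Set.inter_eq_left.2 cover]
    rw [eq_union, piIndicator_union, LinearMap.comp_add, ← LinearMap.comp_assoc,
      ih _ (inf_lt_left.2 not_le₁), ih _ (inf_lt_left.2 not_le₂), LinearMap.zero_comp, add_zero]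

end Hom

theorem stmt4_general (R : Type) [CommRing R] [IsCoherentRing R]
    [NoetherianSpace (PrimeSpectrum R)] (C : Type) [AddCommGroup C] [Module R C]
    (hC : IsCotorsionModule R C)
    (h : ∀ (𝔪 : PrimeSpectrum R), 𝔪.asIdeal.IsMaximal →
      ∀ f : Localization.AtPrime 𝔪.asIdeal →ₗ[R] C, f = 0) :
    ∀ c : C, c = 0 := by
  intro c
  let Q := ∀ p : PrimeSpectrum R, Localization.AtPrime p.asIdeal
  have : FaithfulSMul R Q := Module.FaithfullyFlat.faithfulSMul
  have : Module.Flat R (Q ⧸ (Algebra.linearMap R Q).range) := flat_quotient_range_algebraLinearMap Q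
  obtain ⟨f, hf⟩ := hC.exists_comp_eq (i := Algebra.linearMap R Q)
    (FaithfulSMul.algebraMap_injective R Q) (LinearMap.toSpanSingleton R C c)
  have isUnit_of_notMem : ∀ p : PrimeSpectrum R, ∀ s ∉ p.asIdeal,
      IsUnit (algebraMap R (Module.End R (Localization.AtPrime p.asIdeal)) s) := fun p s hs ↦
    IsLocalizedModule.map_units (S := p.asIdeal.primeCompl) (Algebra.linearMap R _) ⟨s, hs⟩
  have f_eq_zero : f = 0 := hom_pi_eq_zero isUnit_of_notMem h f
  calc c = LinearMap.toSpanSingleton R C c 1 := by simp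
    _ = f (Algebra.linearMap R Q 1) := by rw [← hf, LinearMap.comp_apply]
    _ = 0 := by rw [f_eq_zero, LinearMap.zero_apply]

/-- over a commutative noetherian ring, a cotorsion module `C` with
`Hom_R(R_𝔪, C) = 0` for every maximal ideal `𝔪` is zero. -/
theorem stmt4 (R : Type) [CommRing R] [IsNoetherianRing R]
    (C : Type) [AddCommGroup C] [Module R C] (hC : IsCotorsionModule R C)
    (h : ∀ (𝔪 : PrimeSpectrum R), 𝔪.asIdeal.IsMaximal →
      ∀ f : Localization.AtPrime 𝔪.asIdeal →ₗ[R] C, f = 0) :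
    ∀ c : C, c = 0 :=
  stmt4_general R C hC h
end
end

section
/- Let (R, m, k) be a commutative noetherian local ring with depth(R) = 0, and let N be a pure-injective R-module of finite injective dimension. Then Ext^i_R(k, N) = 0 for all i > 0. -/
open CategoryTheory Opposite

noncomputable section

/-- `N` has injective dimension at most `n`: all Ext-groups above degree `n` vanish. -/
def injDimLE (R : Type) [Ring R] (N : ModuleCat.{0} R) (n : ℕ) : Prop :=
  ∀ M : ModuleCat.{0} R, ∀ j : ℕ, n < j → extV R M N j

/-- The class of pure-injective `R`-modules of finite injective dimension. -/
def PIFinInj (R : Type) [CommRing R] : Set (ModuleCat.{0} R) :=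
  {N | PureInjective R ↥N ∧ ∃ n : ℕ, injDimLE R N n}

/-- The depth of a module over a commutative noetherian local ring, as the infimum of
the degrees in which `Ext(k, M)` does not vanish (`⊤` if all vanish). -/
def rdepth (A : Type) [CommRing A] [IsLocalRing A] (M : Type) [AddCommGroup M]
    [Module A M] : ℕ∞ :=
  sInf {n : ℕ∞ | ∃ i : ℕ, n = (i : ℕ∞) ∧
    ¬ extV A (ModuleCat.of A (IsLocalRing.ResidueField A)) (ModuleCat.of A M) i}

/-- The residue field `k(p)` of `R_p`, as an `R`-module. -/
abbrev resField (R : Type) [CommRing R] (p : PrimeSpectrum R) : Type :=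
  LocalizedModule p.asIdeal.primeCompl (R ⧸ p.asIdeal)

/-- `depth(R_p)`. -/
def ringDepthAt (R : Type) [CommRing R] (p : PrimeSpectrum R) : ℕ∞ :=
  rdepth (Localization.AtPrime p.asIdeal) (Localization.AtPrime p.asIdeal)

/-- `depth_{R_p}(M_p)`. -/
def depthAt (R : Type) [CommRing R] (p : PrimeSpectrum R) (M : Type) [AddCommGroup M]
    [Module R M] : ℕ∞ :=
  rdepth (Localization.AtPrime p.asIdeal) (LocalizedModule p.asIdeal.primeCompl M)

/-- `f : M →ₗ[R] E` exhibits `E` as an injective envelope of `M`: `E` is injective and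
`f` is an essential monomorphism. -/
def IsInjectiveEnvelope (R : Type) [Ring R] {M E : Type} [AddCommGroup M] [Module R M]
    [AddCommGroup E] [Module R E] (f : M →ₗ[R] E) : Prop :=
  Module.Injective R E ∧ Function.Injective f ∧
    ∀ K : Submodule R E, K ≠ ⊥ → K ⊓ LinearMap.range f ≠ ⊥

/-!
Write `k = R ⧸ m` and `X^* = Hom(X, R)`. Dualising a presentation `0 → K → P → X → 0` with `P`
finite free gives an exact sequence `0 → X^* → P^* → K^* → Ext^1(X, R) → 0`. If every `x ∈ m` acts
on `X` through a projective module, as it does on `k`, then the same holds for `K`, and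
`Ext^1(X, R)` is a finite-dimensional `k`-vector space. Thus, if `Ext^j(k, N) = 0` for all `j > l`,
then `Ext^l(X^*, N)` vanishes as soon as `Ext^{l+1}(K^*, N)` does, and passing to higher and higher
syzygies one ends beyond the injective dimension of `N`. For `X = k` this shows
`Ext^l(k^*, N) = 0`; when `k^* ≠ 0`, `k` is a direct summand of `k^*`, whence `Ext^l(k, N) = 0`.
Descending induction on `l` concludes.
-/

universe u v w

section Abelian

variable {C : Type u} [Category.{v} C] [Abelian C] [HasExt.{w} C] {Y : C} {l : ℕ}

lemma subsingleton_ext_of_retract {X X' : C} (r : Retract X X')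
    (h : Subsingleton (Abelian.Ext X' Y l)) : Subsingleton (Abelian.Ext X Y l) := by
  refine subsingleton_of_forall_eq 0 fun e ↦ ?_
  rw [← Abelian.Ext.mk₀_id_comp e, ← r.retract, ← Abelian.Ext.mk₀_comp_mk₀_assoc,
    h.elim ((Abelian.Ext.mk₀ r.r).comp e (zero_add l)) 0, Abelian.Ext.comp_zero]

lemma subsingleton_ext_X₁_of_shortExact {S : ShortComplex C} (hS : S.ShortExact)
    (h₂ : Subsingleton (Abelian.Ext S.X₂ Y l)) (h₃ : Subsingleton (Abelian.Ext S.X₃ Y (l + 1))) :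
    Subsingleton (Abelian.Ext S.X₁ Y l) := by
  refine subsingleton_of_forall_eq 0 fun e ↦ ?_
  obtain ⟨x, rfl⟩ := Abelian.Ext.contravariant_sequence_exact₁ hS Y e (add_comm 1 l) (h₃.elim _ _)
  rw [h₂.elim x 0, Abelian.Ext.comp_zero]

end Abelian

section Module

variable {R : Type u} [CommRing R] {Y : ModuleCat.{u} R} {l : ℕ}

lemma subsingleton_ext_pi {ι : Type} [Finite ι] {M : Type u} [AddCommGroup M] [Module R M]
    (h : Subsingleton (Abelian.Ext (ModuleCat.of R M) Y l)) :
    Subsingleton (Abelian.Ext (ModuleCat.of R (ι → M)) Y l) := by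
  have := Fintype.ofFinite ι
  let F : ι → ModuleCat.{u} R := fun _ ↦ ModuleCat.of R M
  have : Subsingleton (Abelian.Ext (⨁ F) Y l) :=
    (Abelian.Ext.biproductAddEquiv (Limits.biproduct.isBilimit F) Y l).subsingleton
  exact subsingleton_ext_of_retract (.ofIso (ModuleCat.biproductIsoPi F).symm) this

section

variable {A B C : Type u} [AddCommGroup A] [Module R A] [AddCommGroup B] [Module R B]
  [AddCommGroup C] [Module R C]

lemma subsingleton_ext_left_of_exact {f : A →ₗ[R] B} {g : B →ₗ[R] C} (hf : Function.Injective f)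
    (hfg : Function.Exact f g) (hg : Function.Surjective g)
    (hB : Subsingleton (Abelian.Ext (ModuleCat.of R B) Y l))
    (hC : Subsingleton (Abelian.Ext (ModuleCat.of R C) Y (l + 1))) :
    Subsingleton (Abelian.Ext (ModuleCat.of R A) Y l) :=
  subsingleton_ext_X₁_of_shortExact (ModuleCat.shortComplex_shortExact
    (ModuleCat.shortComplexOfCompEqZero f g hfg.linearMap_comp_eq_zero) hfg hf hg) hB hC

lemma subsingleton_ext_left_of_exact_of_cokernel {f : A →ₗ[R] B} {g : B →ₗ[R] C}
    (hf : Function.Injective f) (hfg : Function.Exact f g)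
    (hB : Subsingleton (Abelian.Ext (ModuleCat.of R B) Y l))
    (hC : Subsingleton (Abelian.Ext (ModuleCat.of R C) Y (l + 1)))
    (hcoker : Subsingleton (Abelian.Ext (ModuleCat.of R (C ⧸ g.range)) Y (l + 2))) :
    Subsingleton (Abelian.Ext (ModuleCat.of R A) Y l) := by
  have hrange : Subsingleton (Abelian.Ext (ModuleCat.of R g.range) Y (l + 1)) :=
    subsingleton_ext_left_of_exact g.range.subtype_injective
      (LinearMap.exact_subtype_mkQ g.range) g.range.mkQ_surjective hC hcoker
  refine subsingleton_ext_left_of_exact (g := g.rangeRestrict) hf (fun x ↦ ?_)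
    g.surjective_rangeRestrict hB hrange
  rw [← hfg x, ← LinearMap.mem_ker, LinearMap.ker_rangeRestrict, LinearMap.mem_ker]

end

lemma isTorsionBySet_dual {s : Set R} {M : Type v} [AddCommGroup M] [Module R M]
    (hM : Module.IsTorsionBySet R M s) : Module.IsTorsionBySet R (Module.Dual R M) s := by
  intro φ x
  refine LinearMap.ext fun y ↦ ?_
  rw [LinearMap.smul_apply, ← map_smul, hM, map_zero, LinearMap.zero_apply]

section Torsion

variable {m : Ideal R} [m.IsMaximal] {H : Type u} [AddCommGroup H] [Module R H] [Module.Finite R H]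

lemma exists_linearEquiv_pi_quotient (hH : Module.IsTorsionBySet R H m) :
    ∃ r : ℕ, Nonempty (H ≃ₗ[R] (Fin r → R ⧸ m)) := by
  let := Ideal.Quotient.field m
  let := hH.module
  have := hH.isScalarTower (S := R)
  have : Module.Finite (R ⧸ m) H := .of_restrictScalars_finite R _ H
  exact ⟨_, ⟨(Module.finBasis (R ⧸ m) H).equivFun.restrictScalars R⟩⟩

lemma subsingleton_ext_of_isTorsionBySet (hH : Module.IsTorsionBySet R H m)
    (hk : Subsingleton (Abelian.Ext (ModuleCat.of R (R ⧸ m)) Y l)) :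
    Subsingleton (Abelian.Ext (ModuleCat.of R H) Y l) := by
  obtain ⟨r, ⟨e⟩⟩ := exists_linearEquiv_pi_quotient hH
  exact subsingleton_ext_of_retract (.ofIso e.toModuleIso) (subsingleton_ext_pi hk)

lemma subsingleton_ext_quotient_of_isTorsionBySet [Nontrivial H]
    (hH : Module.IsTorsionBySet R H m) (h : Subsingleton (Abelian.Ext (ModuleCat.of R H) Y l)) :
    Subsingleton (Abelian.Ext (ModuleCat.of R (R ⧸ m)) Y l) := by
  obtain ⟨r, ⟨e⟩⟩ := exists_linearEquiv_pi_quotient hH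
  obtain ⟨i⟩ : Nonempty (Fin r) := by
    by_contra hr
    rw [not_nonempty_iff] at hr
    exact not_subsingleton H e.toEquiv.subsingleton
  refine subsingleton_ext_of_retract
    { i := ModuleCat.ofHom (e.symm.toLinearMap ∘ₗ LinearMap.single R (fun _ ↦ R ⧸ m) i)
      r := ModuleCat.ofHom (LinearMap.proj i ∘ₗ e.toLinearMap)
      retract := ?_ } h
  ext
  simp

end Torsion

end Module

/-- `x` annihilates `X` in the stable module category: multiplication by `x` on `X` factors through
a projective module. Just as in the definition of `Module.Projective` (the case `x = 1`), the free
module on the underlying set of `X` serves as a universal choice, see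
`StablyAnnihilates.of_comp_eq_smul`. -/
def StablyAnnihilates {R : Type u} [CommRing R] (x : R) (X : Type v) [AddCommGroup X]
    [Module R X] : Prop :=
  ∃ s : X →ₗ[R] X →₀ R, Finsupp.linearCombination R id ∘ₗ s = x • LinearMap.id

namespace StablyAnnihilates

variable {R : Type u} [CommRing R] {x : R} {X : Type v} [AddCommGroup X] [Module R X]
  {P : Type w} [AddCommGroup P] [Module R P]

lemma of_comp_eq_smul [Module.Projective R P] {a : X →ₗ[R] P} {b : P →ₗ[R] X}
    (h : b ∘ₗ a = x • LinearMap.id) : StablyAnnihilates x X := by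
  obtain ⟨c, rfl⟩ := Module.projective_lifting_property (Finsupp.linearCombination R id) b
    (Finsupp.linearCombination_id_surjective R X)
  exact ⟨c ∘ₗ a, h⟩

lemma of_smul_eq_zero (h : ∀ y : X, x • y = 0) : StablyAnnihilates x X :=
  ⟨0, by ext y; simp [h y]⟩

lemma exists_comp_subtype_ker_eq_smul (hx : StablyAnnihilates x X) {g : P →ₗ[R] X}
    (hg : Function.Surjective g) :
    ∃ ρ : P →ₗ[R] g.ker, ρ ∘ₗ g.ker.subtype = x • LinearMap.id := by
  obtain ⟨s, hs⟩ := hx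
  obtain ⟨c, hc⟩ := Module.projective_lifting_property g (Finsupp.linearCombination R id) hg
  have hgs : g ∘ₗ c ∘ₗ s = x • LinearMap.id := by rw [← LinearMap.comp_assoc, hc, hs]
  let ρ : P →ₗ[R] P := x • LinearMap.id - (c ∘ₗ s) ∘ₗ g
  have hρ (p : P) : ρ p ∈ g.ker := by
    simpa [ρ, sub_eq_zero] using (LinearMap.congr_fun hgs (g p)).symm
  refine ⟨ρ.codRestrict g.ker hρ, ?_⟩
  ext ⟨p, hp⟩
  simp [ρ, LinearMap.mem_ker.mp hp]

lemma ker [Module.Projective R P] (hx : StablyAnnihilates x X) {g : P →ₗ[R] X}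
    (hg : Function.Surjective g) : StablyAnnihilates x g.ker :=
  let ⟨_, hρ⟩ := hx.exists_comp_subtype_ker_eq_smul hg
  of_comp_eq_smul hρ

lemma isTorsionBySet_dual_ker_quotient {I : Ideal R} (hX : ∀ x ∈ I, StablyAnnihilates x X)
    {g : P →ₗ[R] X} (hg : Function.Surjective g) :
    Module.IsTorsionBySet R (Module.Dual R g.ker ⧸ g.ker.subtype.dualMap.range) I := by
  rintro q ⟨x, hx⟩
  obtain ⟨φ, rfl⟩ := Submodule.mkQ_surjective _ q
  obtain ⟨ρ, hρ⟩ := (hX x hx).exists_comp_subtype_ker_eq_smul hg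
  have hφ : g.ker.subtype.dualMap (φ ∘ₗ ρ) = x • φ := by
    rw [LinearMap.dualMap_apply', LinearMap.comp_assoc, hρ, LinearMap.comp_smul, LinearMap.comp_id]
  rw [← map_smul, Submodule.mkQ_apply, Submodule.Quotient.mk_eq_zero]
  exact ⟨φ ∘ₗ ρ, hφ⟩

end StablyAnnihilates

section Noetherian

variable {R : Type u} [CommRing R] [IsNoetherianRing R] {m : Ideal R} [m.IsMaximal]
  {N : Type u} [AddCommGroup N] [Module R N]

lemma subsingleton_ext_dual_of_stablyAnnihilates {n : ℕ}
    [HasInjectiveDimensionLT (ModuleCat.of R N) n] {l : ℕ}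
    (hk : ∀ j > l, Subsingleton (Abelian.Ext (ModuleCat.of R (R ⧸ m)) (ModuleCat.of R N) (j + 1)))
    (X : Type u) [AddCommGroup X] [Module R X] [Module.Finite R X]
    (hX : ∀ x ∈ m, StablyAnnihilates x X) :
    Subsingleton (Abelian.Ext (ModuleCat.of R (Module.Dual R X)) (ModuleCat.of R N) (l + 1)) := by
  obtain ⟨t, ht⟩ : ∃ t, n ≤ l + 1 + t := ⟨n, Nat.le_add_left ..⟩
  induction t generalizing l X with
  | zero => exact HasInjectiveDimensionLT.subsingleton _ n _ ht _
  | succ t ih =>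
    obtain ⟨r, g, hg⟩ := Module.Finite.exists_fin' R X
    have hexact : Function.Exact g.dualMap g.ker.subtype.dualMap :=
      LinearMap.exact_lcomp_of_exact_of_surjective R (LinearMap.exact_subtype_ker_map g) hg
    have hker : Subsingleton (Abelian.Ext (ModuleCat.of R (Module.Dual R g.ker))
        (ModuleCat.of R N) (l + 1 + 1)) :=
      ih (fun j hj ↦ hk j (by lia)) g.ker (fun x hx ↦ (hX x hx).ker hg) (by lia)
    exact subsingleton_ext_left_of_exact_of_cokernel (LinearMap.dualMap_injective_of_surjective hg)
      hexact (Abelian.Ext.subsingleton_of_projective _ _ l) hker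
      (subsingleton_ext_of_isTorsionBySet
        (StablyAnnihilates.isTorsionBySet_dual_ker_quotient hX hg) (hk (l + 2) (by lia)))

theorem stmt12_general (hm : Nontrivial (R ⧸ m →ₗ[R] R))
    (hN : ∃ n : ℕ, HasInjectiveDimensionLE (ModuleCat.of R N) n) {i : ℕ} (hi : 0 < i) :
    Subsingleton (Abelian.Ext (ModuleCat.of R (R ⧸ m)) (ModuleCat.of R N) i) := by
  obtain ⟨n, _⟩ := hN
  obtain ⟨l, rfl⟩ := Nat.exists_eq_add_one.mpr hi
  clear hi
  obtain ⟨t, ht⟩ : ∃ t, n ≤ l + t := ⟨n, Nat.le_add_left ..⟩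
  induction t generalizing l with
  | zero => exact HasInjectiveDimensionLT.subsingleton _ (n + 1) _ (by lia) _
  | succ t ih =>
    have hk : Module.IsTorsionBySet R (R ⧸ m) m :=
      (Module.isTorsionBySet_quotient_iff m m).mpr fun y _ hx ↦ m.mul_mem_right y hx
    have hdual : Subsingleton (Abelian.Ext (ModuleCat.of R (Module.Dual R (R ⧸ m)))
        (ModuleCat.of R N) (l + 1)) :=
      subsingleton_ext_dual_of_stablyAnnihilates (n := n + 1) (fun j hj ↦ ih j (by lia)) (R ⧸ m)
        fun x hx ↦ .of_smul_eq_zero fun y ↦ @hk y ⟨x, hx⟩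
    exact subsingleton_ext_quotient_of_isTorsionBySet (isTorsionBySet_dual hk) hdual

end Noetherian

section ExtV

variable {R : Type} [CommRing R] {M N : ModuleCat.{0} R}

lemma extV_iff_exactAt (P : ProjectiveResolution M) (n : ℕ) :
    extV R M N n ↔ (P.complex.linearYonedaObj ℤ N).ExactAt n := by
  rw [HomologicalComplex.exactAt_iff_isZero_homology, ← (P.isoExt (R := ℤ) n N).isZero_iff]
  exact ModuleCat.isZero_iff_subsingleton.symm

lemma extV_iff_subsingleton_ext {n : ℕ} (hn : 0 < n) :
    extV R M N n ↔ Subsingleton (Abelian.Ext M N n) := by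
  obtain ⟨n, rfl⟩ := Nat.exists_eq_add_one.mpr hn
  let P := ProjectiveResolution.of M
  rw [extV_iff_exactAt P, HomologicalComplex.exactAt_iff' _ n (n + 1) (n + 2) (by simp) (by simp),
    ShortComplex.moduleCat_exact_iff]
  constructor
  · intro h
    refine subsingleton_of_forall_eq 0 fun e ↦ ?_
    obtain ⟨f, hf, rfl⟩ := P.extMk_surjective e (n + 2) rfl
    exact (P.extMk_eq_zero_iff _ _ _ _ n rfl).mpr (h f hf)
  · intro h f hf
    exact (P.extMk_eq_zero_iff f (n + 2) rfl hf n rfl).mp (Subsingleton.elim _ _)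

lemma extV_zero_of_subsingleton_hom (h : Subsingleton (M ⟶ N)) : extV R M N 0 := by
  let P := ProjectiveResolution.of M
  rw [extV_iff_exactAt P, HomologicalComplex.exactAt_iff' _ 0 0 1 (by simp) (by simp),
    ShortComplex.moduleCat_exact_iff]
  intro (f : P.complex.X 0 ⟶ N) (hf : P.complex.d 1 0 ≫ f = 0)
  have hdesc : P.exact₀.desc f hf = 0 := h.elim _ _
  have hf₀ : f = 0 := by rw [← P.exact₀.g_desc f hf, hdesc, Limits.comp_zero]
  exact ⟨0, (map_zero _).trans hf₀.symm⟩

lemma hasInjectiveDimensionLE_of_injDimLE {n : ℕ} (h : injDimLE R N n) :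
    HasInjectiveDimensionLE N n :=
  .mk fun i hi M e ↦ ((extV_iff_subsingleton_ext (Nat.zero_lt_of_lt hi)).mp (h M i hi)).elim e 0

lemma nontrivial_hom_of_rdepth_eq_zero [IsLocalRing R] {M : Type} [AddCommGroup M] [Module R M]
    (h : rdepth R M = 0) : Nontrivial (IsLocalRing.ResidueField R →ₗ[R] M) := by
  obtain ⟨i, hi, hext⟩ := (ENat.sInf_eq_zero).mp h
  obtain rfl : i = 0 := by exact_mod_cast hi.symm
  by_contra hsub
  rw [not_nontrivial_iff_subsingleton] at hsub
  exact hext (extV_zero_of_subsingleton_hom ModuleCat.homEquiv.subsingleton)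

end ExtV

/-- over a commutative noetherian local ring of depth zero, every
pure-injective module `N` of finite injective dimension satisfies `Ext^i(k, N) = 0`
for all `i > 0`. -/
theorem stmt12 (R : Type) [CommRing R] [IsNoetherianRing R] [IsLocalRing R]
    (hdepth : rdepth R R = 0)
    (N : Type) [AddCommGroup N] [Module R N]
    (hpi : PureInjective R N) (hfid : ∃ n : ℕ, injDimLE R (ModuleCat.of R N) n) :
    ∀ i : ℕ, 0 < i →
      extV R (ModuleCat.of R (IsLocalRing.ResidueField R)) (ModuleCat.of R N) i := by
  exact fun i hi ↦ (extV_iff_subsingleton_ext hi).mpr (stmt12_general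
    (nontrivial_hom_of_rdepth_eq_zero hdepth)
    (hfid.imp fun _ ↦ hasInjectiveDimensionLE_of_injDimLE) hi)
end
end

section
/- Let R be a commutative noetherian ring and C a nonempty class of R-modules closed under submodules, extensions, and direct limits. Then there is a subset X of Spec R such that C = {M : Ass M ⊆ X}. -/
open CategoryTheory Opposite

noncomputable section

/-!
Take `X = ⋃ N ∈ 𝒞, Ass N`. Every module is the directed union of its finitely generated
submodules, so it suffices to treat a finitely generated `M` with `Ass M ⊆ X`. For `p ∈ Ass M` let
`K` be maximal among the submodules of `M` that embed in `R ⧸ p`. Then `K` is nonzero and lies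
in `𝒞`, because `R ⧸ p` embeds in a member of `𝒞`; moreover `Ass (M ⧸ K) ⊆ Ass M`, so by noetherian
induction `M ⧸ K` lies in `𝒞`, and `M` is an extension of `M ⧸ K` by `K`.
-/

universe u v w

/-- `M` embeds in `N`, that is, `M` is isomorphic to a submodule of `N`. -/
def EmbedsIn (R : Type u) [Semiring R] (M : Type v) (N : Type w) [AddCommMonoid M] [Module R M]
    [AddCommMonoid N] [Module R N] : Prop :=
  ∃ f : M →ₗ[R] N, Function.Injective f

section EmbedsIn

variable {R : Type u} [CommRing R] {M : Type v} [AddCommGroup M] [Module R M] {N : Type w}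
  [AddCommGroup N] [Module R N] {K L : Submodule R M} {p : Ideal R} {c : R}

theorem EmbedsIn.smul_eq_zero_iff [p.IsPrime] (h : EmbedsIn R N (R ⧸ p)) {x : N} :
    c • x = 0 ↔ c ∈ p ∨ x = 0 := by
  obtain ⟨f, hf⟩ := h
  rw [← map_eq_zero_iff f hf, map_smul, Algebra.smul_def, mul_eq_zero, map_eq_zero_iff f hf,
    Ideal.Quotient.algebraMap_eq, Ideal.Quotient.eq_zero_iff_mem]

theorem EmbedsIn.smul_eq_zero_iff_of_mem [p.IsPrime] (h : EmbedsIn R K (R ⧸ p)) {x : M}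
    (hx : x ∈ K) : c • x = 0 ↔ c ∈ p ∨ x = 0 := by
  simpa only [Submodule.mk_eq_zero, SetLike.mk_smul_mk] using
    h.smul_eq_zero_iff (c := c) (x := ⟨x, hx⟩)

theorem exists_ne_zero_smul_eq_zero_of_maximal_embedsIn
    (hK : Maximal (fun K : Submodule R M ↦ EmbedsIn R K N) K) (hKL : K < L)
    (hc : ∀ z ∈ L, c • z ∈ K) : ∃ z ∈ L, z ≠ 0 ∧ c • z = 0 := by
  by_contra! hinj
  obtain ⟨f, hf⟩ := hK.prop
  let mulc : L →ₗ[R] K := (LinearMap.lsmul R M c).restrict hc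
  have hmulc : Function.Injective mulc := by
    rw [injective_iff_map_eq_zero]
    intro z hz
    by_contra hz0
    exact hinj z z.2 (Subtype.coe_ne_coe.mpr hz0) (congrArg Subtype.val hz)
  exact hK.not_prop_of_gt hKL ⟨f ∘ₗ mulc, hf.comp hmulc⟩

end EmbedsIn

theorem noetherian_induction_quotient {R : Type u} [Ring R]
    {motive : ∀ (Q : Type v) [AddCommGroup Q] [Module R Q], Prop}
    (step : ∀ (Q : Type v) [AddCommGroup Q] [Module R Q] [IsNoetherian R Q],
      (∀ K : Submodule R Q, K ≠ ⊥ → motive (Q ⧸ K)) → motive Q)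
    (M : Type v) [AddCommGroup M] [Module R M] [IsNoetherian R M] : motive M := by
  suffices h : ∀ (N : Submodule R M) (Q : Type v) [AddCommGroup Q] [Module R Q] (g : M →ₗ[R] Q),
      Function.Surjective g → LinearMap.ker g = N → motive Q from
    h ⊥ M LinearMap.id Function.surjective_id LinearMap.ker_id
  intro N
  induction N using WellFoundedGT.induction with
  | ind N ih =>
    rintro Q _ _ g hg rfl
    have : IsNoetherian R Q := isNoetherian_of_surjective g (LinearMap.range_eq_top.mpr hg)
    refine step Q fun K hK ↦ ih (K.comap g) ?_ (Q ⧸ K) (K.mkQ ∘ₗ g)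
      (K.mkQ_surjective.comp hg) (by rw [LinearMap.ker_comp, Submodule.ker_mkQ])
    rw [← Submodule.comap_bot]
    exact Submodule.comap_strictMono_of_surjective hg (bot_lt_iff_ne_bot.mpr hK)

section AssociatedPrimes

variable {R : Type u} [CommRing R] [IsNoetherianRing R] {M : Type v} [AddCommGroup M] [Module R M]
  {p q : Ideal R}

theorem isAssociatedPrime_iff_exists_forall_mem_iff :
    IsAssociatedPrime q M ↔ q.IsPrime ∧ ∃ x : M, ∀ r, r ∈ q ↔ r • x = 0 := by
  simp only [isAssociatedPrime_iff, Ideal.ext_iff, Submodule.mem_colon_singleton,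
    Submodule.mem_bot]

theorem isAssociatedPrime_of_map_eq_smul {N : Type w} [AddCommGroup N] [Module R N]
    (hq : q.IsPrime) (g : M →ₗ[R] N) {y : N} (hy : ∀ r, r • y = 0 → r ∈ q) {z : M} {r : R}
    (hr : r ∉ q) (hgz : g z = r • y) (hz : ∀ t ∈ q, t • z = 0) : IsAssociatedPrime q M := by
  refine isAssociatedPrime_iff_exists_forall_mem_iff.mpr ⟨hq, z, fun t ↦ ⟨hz t, fun ht ↦ ?_⟩⟩
  have htr : (t * r) • y = 0 := by rw [mul_smul, ← hgz, ← map_smul, ht, map_zero]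
  exact (hq.mem_or_mem (hy _ htr)).resolve_right hr

variable {K : Submodule R M}

theorem isAssociatedPrime_of_quotient_of_smul_eq_zero (hpK : ∀ s ∈ p, ∀ x ∈ K, s • x = 0)
    (hq : IsAssociatedPrime q (M ⧸ K)) (hpq : ¬ p ≤ q) : IsAssociatedPrime q M := by
  obtain ⟨hqprime, x, hx⟩ := isAssociatedPrime_iff_exists_forall_mem_iff.mp hq
  obtain ⟨y, rfl⟩ := K.mkQ_surjective x
  obtain ⟨s, hsp, hsq⟩ := SetLike.not_le_iff_exists.mp hpq
  refine isAssociatedPrime_of_map_eq_smul hqprime K.mkQ (fun r ↦ (hx r).mpr) hsq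
    (map_smul K.mkQ s y) fun t ht ↦ ?_
  have hty : t • y ∈ K := by
    rwa [hx, ← map_smul, Submodule.mkQ_apply, Submodule.Quotient.mk_eq_zero] at ht
  rw [smul_comm, hpK s hsp _ hty]

/- If `c ∈ q \ p` and `y` generates a copy of `R ⧸ q` in `M ⧸ K`, then `c` maps `K + R y` into `K`;
by maximality of `K` this map kills some `z ≠ 0`, and then `q` is the annihilator of `z`. -/
theorem isAssociatedPrime_of_quotient_of_maximal_embedsIn [p.IsPrime]
    (hK : Maximal (fun K : Submodule R M ↦ EmbedsIn R K (R ⧸ p)) K)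
    (hq : IsAssociatedPrime q (M ⧸ K)) (hqp : ¬ q ≤ p) : IsAssociatedPrime q M := by
  obtain ⟨hqprime, x, hx⟩ := isAssociatedPrime_iff_exists_forall_mem_iff.mp hq
  obtain ⟨y, rfl⟩ := K.mkQ_surjective x
  have mem_iff (r : R) : r ∈ q ↔ r • y ∈ K := by
    rw [hx, ← map_smul, Submodule.mkQ_apply, Submodule.Quotient.mk_eq_zero]
  have hyK : y ∉ K := fun hy ↦ hqprime.one_notMem ((mem_iff 1).mpr (by rwa [one_smul]))
  have mem_sup_iff (z : M) : z ∈ K ⊔ R ∙ y ↔ ∃ k ∈ K, ∃ r : R, k + r • y = z := by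
    simp only [Submodule.mem_sup, Submodule.mem_span_singleton, exists_exists_eq_and]
  have smul_mem {t : R} (ht : t ∈ q) {z : M} (hz : z ∈ K ⊔ R ∙ y) : t • z ∈ K := by
    obtain ⟨k, hk, r, rfl⟩ := (mem_sup_iff z).mp hz
    rw [smul_add, smul_comm t r y]
    exact K.add_mem (K.smul_mem t hk) (K.smul_mem r ((mem_iff t).mp ht))
  obtain ⟨c, hcq, hcp⟩ := SetLike.not_le_iff_exists.mp hqp
  have eq_zero_of_mem {z : M} (hz : z ∈ K) (hcz : c • z = 0) : z = 0 :=
    ((hK.prop.smul_eq_zero_iff_of_mem hz).mp hcz).resolve_left hcp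
  have hKL : K < K ⊔ R ∙ y := by
    rwa [left_lt_sup, Submodule.span_singleton_le_iff_mem]
  obtain ⟨z, hzL, hz0, hcz⟩ :=
    exists_ne_zero_smul_eq_zero_of_maximal_embedsIn hK hKL fun _ ↦ smul_mem hcq
  obtain ⟨k, hk, r, rfl⟩ := (mem_sup_iff z).mp hzL
  have hrq : r ∉ q := fun hr ↦
    hz0 (eq_zero_of_mem (K.add_mem hk ((mem_iff r).mp hr)) hcz)
  have hmk : K.mkQ (k + r • y) = r • K.mkQ y := by
    rw [map_add, map_smul, add_eq_right, Submodule.mkQ_apply, Submodule.Quotient.mk_eq_zero]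
    exact hk
  refine isAssociatedPrime_of_map_eq_smul hqprime K.mkQ (fun t ↦ (hx t).mpr) hrq hmk fun t ht ↦ ?_
  exact eq_zero_of_mem (smul_mem ht hzL) (by rw [smul_comm, hcz, smul_zero])

theorem associatedPrimes_quotient_subset_insert [p.IsPrime]
    (hK : Maximal (fun K : Submodule R M ↦ EmbedsIn R K (R ⧸ p)) K) :
    associatedPrimes R (M ⧸ K) ⊆ insert p (associatedPrimes R M) := by
  intro q hq
  by_cases hqp : q ≤ p
  · by_cases hpq : p ≤ q
    · exact Or.inl (le_antisymm hqp hpq)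
    · refine Or.inr (isAssociatedPrime_of_quotient_of_smul_eq_zero (fun s hs x hx ↦ ?_) hq hpq)
      exact (hK.prop.smul_eq_zero_iff_of_mem hx).mpr (Or.inl hs)
  · exact Or.inr (isAssociatedPrime_of_quotient_of_maximal_embedsIn hK hq hqp)

theorem exists_ne_bot_embedsIn_and_associatedPrimes_quotient_subset [IsNoetherian R M]
    (hp : p ∈ associatedPrimes R M) :
    ∃ K : Submodule R M, K ≠ ⊥ ∧ EmbedsIn R K (R ⧸ p) ∧
      associatedPrimes R (M ⧸ K) ⊆ associatedPrimes R M := by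
  obtain ⟨_, f, hf⟩ := (isAssociatedPrime_iff_exists_injective_linearMap p M).mp hp
  have hrange : EmbedsIn R (LinearMap.range f) (R ⧸ p) :=
    ⟨(LinearEquiv.ofInjective f hf).symm, (LinearEquiv.ofInjective f hf).symm.injective⟩
  obtain ⟨K, hK⟩ := exists_maximal_of_wellFoundedGT
    (fun K : Submodule R M ↦ EmbedsIn R K (R ⧸ p)) ⟨_, hrange⟩
  have hK0 : K ≠ ⊥ := by
    rintro rfl
    have hf0 : f = 0 := LinearMap.range_eq_bot.mp (le_bot_iff.mp (hK.2 hrange bot_le))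
    have h10 : (1 : R ⧸ p) = 0 := hf (by rw [hf0, LinearMap.zero_apply, LinearMap.zero_apply])
    exact one_ne_zero h10
  refine ⟨K, hK0, hK.prop, ?_⟩
  exact (associatedPrimes_quotient_subset_insert hK).trans_eq (Set.insert_eq_of_mem hp)

end AssociatedPrimes

theorem mem_of_forall_fg_mem {R : Type u} [Ring R] {𝒞 : Set (ModuleCat.{v} R)}
    (hsub : ∀ M ∈ 𝒞, ∀ (A : Type v) [AddCommGroup A] [Module R A] (f : A →ₗ[R] ↥M),
      Function.Injective f → ModuleCat.of R A ∈ 𝒞)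
    (hlim : ∀ (ι : Type v) [Preorder ι] [IsDirected ι (· ≤ ·)] [DecidableEq ι] [Nonempty ι]
      (G : ι → Type v) [∀ i, AddCommGroup (G i)] [∀ i, Module R (G i)]
      (f : ∀ i j, i ≤ j → G i →ₗ[R] G j), DirectedSystem G (fun i j h => f i j h) →
      (∀ i, ModuleCat.of R (G i) ∈ 𝒞) → ModuleCat.of R (Module.DirectLimit G f) ∈ 𝒞)
    (M : ModuleCat.{v} R) (hM : ∀ N : Submodule R M, N.FG → ModuleCat.of R N ∈ 𝒞) : M ∈ 𝒞 := by
  classical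
  let e := (Module.fgSystem.equiv R M).symm
  have hdirect := hlim {N : Submodule R M // N.FG} (fun N ↦ N.1) (Module.fgSystem R M)
    inferInstance fun N ↦ hM N.1 N.2
  exact hsub _ hdirect M e.toLinearMap e.injective

theorem mem_of_finite_of_associatedPrimes_subset {R : Type u} [CommRing R] [IsNoetherianRing R]
    {𝒞 : Set (ModuleCat.{v} R)} (hne : 𝒞.Nonempty)
    (hsub : ∀ M ∈ 𝒞, ∀ (A : Type v) [AddCommGroup A] [Module R A] (f : A →ₗ[R] ↥M),
      Function.Injective f → ModuleCat.of R A ∈ 𝒞)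
    (hext : ∀ (L M N : ModuleCat.{v} R), L ∈ 𝒞 → N ∈ 𝒞 →
      ∀ (f : ↥L →ₗ[R] ↥M) (g : ↥M →ₗ[R] ↥N), Function.Injective f →
        Function.Surjective g → LinearMap.range f = LinearMap.ker g → M ∈ 𝒞)
    (M : Type v) [AddCommGroup M] [Module R M] [Module.Finite R M]
    (hM : associatedPrimes R M ⊆ ⋃ N ∈ 𝒞, associatedPrimes R N) : ModuleCat.of R M ∈ 𝒞 := by
  refine noetherian_induction_quotient (R := R) (motive := fun Q _ _ ↦
    associatedPrimes R Q ⊆ ⋃ N ∈ 𝒞, associatedPrimes R N → ModuleCat.of R Q ∈ 𝒞) ?_ M hM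
  intro Q _ _ _ ih hQ
  rcases subsingleton_or_nontrivial Q with _ | _
  · obtain ⟨N, hN⟩ := hne
    exact hsub N hN Q 0 (Function.injective_of_subsingleton _)
  · obtain ⟨p, hp⟩ := associatedPrimes.nonempty R Q
    obtain ⟨K, hK0, ⟨f, hf⟩, hQK⟩ := exists_ne_bot_embedsIn_and_associatedPrimes_quotient_subset hp
    obtain ⟨N, hN, hpN⟩ := Set.mem_iUnion₂.mp (hQ hp)
    obtain ⟨_, g, hg⟩ := (isAssociatedPrime_iff_exists_injective_linearMap p N).mp hpN
    have hK : ModuleCat.of R K ∈ 𝒞 := hsub N hN K (g ∘ₗ f) (hg.comp hf)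
    have hquot : ModuleCat.of R (Q ⧸ K) ∈ 𝒞 := ih K hK0 (hQK.trans hQ)
    exact hext _ (ModuleCat.of R Q) _ hK hquot K.subtype K.mkQ K.injective_subtype
      K.mkQ_surjective (by rw [Submodule.range_subtype, Submodule.ker_mkQ])

theorem stmt16_general (R : Type u) [CommRing R] [IsNoetherianRing R]
    (𝒞 : Set (ModuleCat.{v} R)) (hne : 𝒞.Nonempty)
    (hsub : ∀ M ∈ 𝒞, ∀ (A : Type v) [AddCommGroup A] [Module R A] (f : A →ₗ[R] ↥M),
      Function.Injective f → ModuleCat.of R A ∈ 𝒞)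
    (hext : ∀ (L M N : ModuleCat.{v} R), L ∈ 𝒞 → N ∈ 𝒞 →
      ∀ (f : ↥L →ₗ[R] ↥M) (g : ↥M →ₗ[R] ↥N), Function.Injective f →
        Function.Surjective g → LinearMap.range f = LinearMap.ker g → M ∈ 𝒞)
    (hfg : ∀ M : ModuleCat.{v} R,
      (∀ N : Submodule R M, N.FG → ModuleCat.of R N ∈ 𝒞) → M ∈ 𝒞) :
    𝒞 = {M : ModuleCat.{v} R | associatedPrimes R (↥M) ⊆ ⋃ N ∈ 𝒞, associatedPrimes R (↥N)} := by
  refine Set.Subset.antisymm (fun M hM p hp ↦ Set.mem_biUnion hM hp) fun M hM ↦ hfg M ?_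
  intro N hN
  have : Module.Finite R N := Module.Finite.iff_fg.mpr hN
  have hNM : associatedPrimes R N ⊆ associatedPrimes R M :=
    associatedPrimes.subset_of_injective N.injective_subtype
  exact mem_of_finite_of_associatedPrimes_subset hne hsub hext N (hNM.trans hM)

/-- over a commutative noetherian ring, a nonempty class of modules closed
under submodules, extensions and direct limits is of the form
`{M ∣ Ass M ⊆ X}` for some set `X` of prime ideals. -/
theorem stmt16 (R : Type) [CommRing R] [IsNoetherianRing R]
    (𝒞 : Set (ModuleCat.{0} R)) (hne : 𝒞.Nonempty)
    (hsub : ∀ M ∈ 𝒞, ∀ (A : Type) [AddCommGroup A] [Module R A] (f : A →ₗ[R] ↥M),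
      Function.Injective f → ModuleCat.of R A ∈ 𝒞)
    (hext : ∀ (L M N : ModuleCat.{0} R), L ∈ 𝒞 → N ∈ 𝒞 →
      ∀ (f : ↥L →ₗ[R] ↥M) (g : ↥M →ₗ[R] ↥N), Function.Injective f →
        Function.Surjective g → LinearMap.range f = LinearMap.ker g → M ∈ 𝒞)
    (hlim : ∀ (ι : Type) [Preorder ι] [IsDirected ι (· ≤ ·)] [DecidableEq ι] [Nonempty ι]
      (G : ι → Type) [∀ i, AddCommGroup (G i)] [∀ i, Module R (G i)]
      (f : ∀ i j, i ≤ j → G i →ₗ[R] G j), DirectedSystem G (fun i j h => f i j h) →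
      (∀ i, ModuleCat.of R (G i) ∈ 𝒞) → ModuleCat.of R (Module.DirectLimit G f) ∈ 𝒞) :
    ∃ X : Set (Ideal R), 𝒞 = {M : ModuleCat.{0} R | associatedPrimes R (↥M) ⊆ X} := by
  exact ⟨_, stmt16_general R 𝒞 hne hsub hext (mem_of_forall_fg_mem hsub hlim)⟩
end
end

section
/- Let R be a commutative noetherian ring. Then the following are equivalent: (i) every function φ : Spec R → ℤ_{≥0} with φ(p) ≤ depth(R_p) for all primes p is order-preserving, i.e. φ(q) ≤ φ(p) whenever q ⊆ p; (ii) the Krull dimension of R is at most 1. -/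
/-!
A depth-bounded function is free to take the value `1` at any single prime of positive depth, so
all such functions are order-preserving exactly when `depth R_p = 0` for every non-maximal prime
`p`. Now `depth R_p = 0` means that there is a nonzero map `k(p) → R_p`, i.e. that `p` is an
associated prime of `R`. In dimension at most one the non-maximal primes are minimal, hence
associated. Conversely, by prime avoidance and Krull's principal ideal theorem a prime of height at
least two contains infinitely many primes, only finitely many of which can be associated.
-/

open CategoryTheory Opposite

noncomputable section

section ExtZero

universe u v

variable (S : Type*) [Ring S] {C : Type u} [Category.{v} C]

instance preservesLimits_linearYoneda_obj [Preadditive C] [Linear S C] (Y : C) :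
    Limits.PreservesLimits ((linearYoneda S C).obj Y) :=
  have : Limits.PreservesLimits ((linearYoneda S C).obj Y ⋙ forget (ModuleCat.{v} S)) :=
    inferInstanceAs (Limits.PreservesLimits (yoneda.obj Y))
  Limits.preservesLimits_of_reflects_of_preserves _ (forget (ModuleCat.{v} S))

/-- The identification of `Ext⁰(X, Y)` with the module of morphisms `X ⟶ Y`. -/
def extZeroIso [Abelian C] [Linear S C] [EnoughProjectives C] (X Y : C) :
    ((_root_.Ext S C 0).obj (op X)).obj Y ≅ ModuleCat.of S (X ⟶ Y) :=
  have : Limits.PreservesFiniteColimits ((linearYoneda S C).obj Y).rightOp :=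
    Limits.preservesFiniteColimits_rightOp _
  (((linearYoneda S C).obj Y).rightOp.leftDerivedZeroIsoSelf.app X).unop.symm

end ExtZero

section Depth

lemma extV_zero_iff {A : Type} [Ring A] (M N : ModuleCat.{0} A) :
    extV A M N 0 ↔ Subsingleton (M →ₗ[A] N) :=
  (extZeroIso ℤ M N).toLinearEquiv.toEquiv.subsingleton_congr.trans
    ModuleCat.homEquiv.subsingleton_congr

lemma mem_associatedPrimes_iff_nontrivial_linearMap {A M : Type*} [CommRing A] [IsNoetherianRing A]
    [AddCommGroup M] [Module A M] (m : Ideal A) [m.IsMaximal] :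
    m ∈ associatedPrimes A M ↔ Nontrivial (A ⧸ m →ₗ[A] M) := by
  rw [AssociatedPrimes.mem_iff, isAssociatedPrime_iff_exists_injective_linearMap,
    nontrivial_iff_exists_ne 0]
  have : IsSimpleModule A (A ⧸ m) := isSimpleModule_iff_isCoatom.mpr Ideal.IsMaximal.out
  constructor
  · rintro ⟨_, f, hf⟩
    refine ⟨f, ?_⟩
    rintro rfl
    exact one_ne_zero (hf rfl : (1 : A ⧸ m) = 0)
  · rintro ⟨f, hf⟩
    exact ⟨inferInstance, f, f.injective_or_eq_zero.resolve_right hf⟩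

lemma rdepth_eq_zero_iff {A M : Type} [CommRing A] [IsNoetherianRing A] [IsLocalRing A]
    [AddCommGroup M] [Module A M] :
    rdepth A M = 0 ↔ IsLocalRing.maximalIdeal A ∈ associatedPrimes A M := by
  have hmem : rdepth A M = 0 ↔
      ¬ extV A (ModuleCat.of A (IsLocalRing.ResidueField A)) (ModuleCat.of A M) 0 := by
    simp [rdepth, ENat.sInf_eq_zero, eq_comm (a := (0 : ℕ∞))]
  rw [hmem, extV_zero_iff, not_subsingleton_iff_nontrivial,
    mem_associatedPrimes_iff_nontrivial_linearMap]
  rfl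

lemma maximalIdeal_mem_associatedPrimes_iff {R M : Type*} [CommRing R] [IsNoetherianRing R]
    [AddCommGroup M] [Module R M] (p : Ideal R) [p.IsPrime] (A : Type*) {M' : Type*} [CommRing A]
    [IsLocalRing A] [Algebra R A] [IsLocalization.AtPrime A p] [AddCommGroup M'] [Module R M']
    [Module A M'] [IsScalarTower R A M'] (f : M →ₗ[R] M')
    [IsLocalizedModule p.primeCompl f] :
    IsLocalRing.maximalIdeal A ∈ associatedPrimes A M' ↔ p ∈ associatedPrimes R M := by
  open Module.associatedPrimes in
  rw [← preimage_comap_associatedPrimes_eq_associatedPrimes_of_isLocalizedModule p.primeCompl A f,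
    Set.mem_preimage, ← Ideal.under_def, IsLocalization.AtPrime.under_maximalIdeal A p]

lemma ringDepthAt_eq_zero_iff {R : Type} [CommRing R] [IsNoetherianRing R] (p : PrimeSpectrum R) :
    ringDepthAt R p = 0 ↔ p.asIdeal ∈ associatedPrimes R R :=
  have : IsNoetherianRing (Localization.AtPrime p.asIdeal) :=
    IsLocalization.isNoetherianRing p.asIdeal.primeCompl _ inferInstance
  rdepth_eq_zero_iff.trans
    (maximalIdeal_mem_associatedPrimes_iff p.asIdeal _ (Algebra.linearMap R _))

end Depth

section Dimension

variable {R : Type*} [CommRing R] [IsNoetherianRing R]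

lemma infinite_Iio_of_one_lt_height {q : PrimeSpectrum R} (hq : 1 < q.asIdeal.height) :
    (Set.Iio q).Infinite := by
  intro hfin
  obtain ⟨a, haq, ha⟩ : ∃ a ∈ q.asIdeal, ∀ p < q, a ∉ p.asIdeal := by
    have havoid := (Ideal.subset_union_prime_finite hfin (f := PrimeSpectrum.asIdeal) q q
      (fun p _ _ _ ↦ p.isPrime) (I := q.asIdeal)).not.mpr
      fun ⟨p, hpq, hqp⟩ ↦ hpq.not_ge hqp
    simpa [Set.not_subset] using havoid
  obtain ⟨p, hp, hpq⟩ := Ideal.exists_minimalPrimes_le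
    ((Ideal.span_singleton_le_iff_mem q.asIdeal).mpr haq)
  have hp_height : p.height ≤ 1 :=
    Ideal.height_le_one_of_isPrincipal_of_mem_minimalPrimes (Ideal.span {a}) p hp
  have hp_ne : p ≠ q.asIdeal := by
    rintro rfl
    exact hq.not_ge hp_height
  exact ha ⟨p, hp.isPrime⟩ (hpq.lt_of_ne hp_ne) (hp.1.2 (Ideal.mem_span_singleton_self a))

lemma mem_associatedPrimes_of_mem_minimalPrimes {p : Ideal R} (hp : p ∈ minimalPrimes R) :
    p ∈ associatedPrimes R R := by
  apply Module.associatedPrimes.minimalPrimes_annihilator_subset_associatedPrimes R R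
  rwa [Module.annihilator_eq_bot.mpr inferInstance]

lemma ringKrullDim_le_one_iff_forall_lt_mem_associatedPrimes :
    ringKrullDim R ≤ 1 ↔
      ∀ ⦃p q : PrimeSpectrum R⦄, p < q → p.asIdeal ∈ associatedPrimes R R := by
  constructor
  · intro hdim p q hpq
    have hmin : IsMin p := (Order.krullDim_le_one_iff.mp hdim p).resolve_right hpq.not_isMax
    exact mem_associatedPrimes_of_mem_minimalPrimes (PrimeSpectrum.isMin_iff.mp hmin)
  · intro hass
    refine (ringKrullDim_le_iff_height_le 1).mpr fun I hI ↦ ?_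
    by_contra! hheight
    have hfin : (PrimeSpectrum.asIdeal ⁻¹' associatedPrimes R R).Finite :=
      (associatedPrimes.finite R R).preimage (fun _ _ _ _ ↦ PrimeSpectrum.ext)
    obtain ⟨p, hpI, hp⟩ := (infinite_Iio_of_one_lt_height (q := ⟨I, hI⟩)
      (by exact_mod_cast hheight)).exists_notMem_finite hfin
    exact hp (hass hpI)

end Dimension

lemma forall_le_imp_monotone_iff {α : Type*} [PartialOrder α] (d : α → ℕ∞) :
    (∀ φ : α → ℕ, (∀ a, (φ a : ℕ∞) ≤ d a) → Monotone φ) ↔ ∀ ⦃a b : α⦄, a < b → d a = 0 := by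
  classical
  constructor
  · intro hmono a b hab
    by_contra hda
    have hbound : ∀ c, ((Pi.single a 1 : α → ℕ) c : ℕ∞) ≤ d c := by
      intro c
      obtain rfl | hca := eq_or_ne c a
      · simpa [Order.one_le_iff_ne_zero] using hda
      · simp [hca]
    simpa [hab.ne'] using hmono _ hbound hab.le
  · intro hd φ hφ a b hab
    obtain rfl | hlt := hab.eq_or_lt
    · exact le_rfl
    have hφa : φ a = 0 := by simpa [hd hlt] using hφ a
    exact hφa.trans_le (Nat.zero_le _)

/-- a commutative noetherian ring has the property that every function
`φ : Spec R → ℤ≥0` bounded by the depth function is order-preserving if and only if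
its Krull dimension is at most one. -/
theorem stmt19 (R : Type) [CommRing R] [IsNoetherianRing R] :
    (∀ φ : PrimeSpectrum R → ℕ, (∀ p, (φ p : ℕ∞) ≤ ringDepthAt R p) →
      ∀ p q : PrimeSpectrum R, p.asIdeal ≤ q.asIdeal → φ p ≤ φ q) ↔
    ringKrullDim R ≤ 1 := by
  calc
    _ ↔ ∀ ⦃p q : PrimeSpectrum R⦄, p < q → ringDepthAt R p = 0 :=
      forall_le_imp_monotone_iff (ringDepthAt R)
    _ ↔ ∀ ⦃p q : PrimeSpectrum R⦄, p < q → p.asIdeal ∈ associatedPrimes R R := by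
      simp only [ringDepthAt_eq_zero_iff]
    _ ↔ ringKrullDim R ≤ 1 := ringKrullDim_le_one_iff_forall_lt_mem_associatedPrimes.symm
end
end
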